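/- Let P ⊂ ℝ^n be a full-dimensional simple lattice polytope and φ : ℝ^n → ℂ a homogeneous polynomial function of degree d. Then the polynomial G_φ satisfies the functional equation G_φ(q,y) = (−y)^{n+d} · G_φ(−q, 1/y); that is, for every real number q and every nonzero real number y, G_φ(q,y) = (−y)^{n+d} · G_φ(−q, 1/y). -/

import Mathlib

/-! The functional equation is a weighted form of Ehrhart reciprocity, and it follows from a weighted
form of Brion's formula in which each vertex contribution is visibly symmetric.

**Local structure.** At a vertex `v` of a simple lattice polytope the `n` edges give a basis of `ℝ^n`
of integral vectors, `P` lies in the cone `v + cone(edges)`, and the faces through `v` are obtained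
by setting some of the `n` coordinates to zero (`exists_local_basis`, `IsFaceOf.eq_cell`). The
resulting combinatorial data is packaged as a `SimpleData` (`exists_simpleData`), in which faces
correspond to the sets `K` of facets having a common vertex.

**Polar decomposition.** Choose a linear functional `ξ` that vanishes on no edge. At every vertex flip
those edges of the cone on which `ξ` increases, with a sign for each. The signed sum of the
indicators of the flipped cones of a face is the indicator of the face (`SimpleData.polar_eq`): the
sum does not depend on `ξ`, because crossing a wall changes the contributions of the two endpoints
of an edge by opposite amounts, and for `ξ` adapted to the point at hand it can be evaluated.

**Weighted Brion formula.** Summing over all faces with weights `(1 + y)^dim (-y)^codim`, the cone at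
`v` acquires a product weight, one factor for each edge. Since `exp ξ` is summable over the lattice
points of a flipped cone, the weighted sum of `exp ξ` over the lattice points of `q • F` becomes
`∑_v exp (q ξ(v)) ∑_r ∏_i N_y(r_i, ξ(u_i)) / (1 - exp ξ(u_i))`, where `r` runs over the lattice points
of the fundamental parallelepiped at `v`, with coordinates `r_i`, the `u_i` are the edge vectors at
`v`, and `N_y(θ, c)` is `1 + y e^c` if `θ = 0` and `(1 + y) e^{θ c}` otherwise
(`SimpleData.exp_sum`). By linear independence of characters this is an identity of formal
exponentials, hence also of power series in a scaling variable `X` of `ξ`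
(`SimpleData.X_pow_mul_gSum`).

**Symmetry.** Under `X ↦ -X`, `y ↦ 1/y` the factor for `(θ, c)` is multiplied by a constant, and `θ`
is replaced by the fractional part of `-θ`; this only permutes the `r`
(`SimpleData.evalNeg_localSeries`). Comparing coefficients of `X ^ (n + d)` gives the functional
equation for `φ = ξ^d`, and powers of generic linear forms span all homogeneous polynomials of
degree `d` (`mem_span_linForm`), which yields `SimpleData.reciprocity`.
-/

open scoped Pointwise Classical
open MeasureTheory Polynomial

noncomputable section

/-- The real vector corresponding to an integer vector in `ℤ^n ⊂ ℝ^n`. -/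
def intVec {n : ℕ} (m : Fin n → ℤ) : Fin n → ℝ := fun i => (m i : ℝ)

/-- `F` is a face of the polytope `P`: either `P` itself or a nonempty set of maximizers
over `P` of a linear functional. -/
def IsFaceOf {n : ℕ} (P F : Set (Fin n → ℝ)) : Prop :=
  F = P ∨ (F.Nonempty ∧ ∃ u : (Fin n → ℝ) →ₗ[ℝ] ℝ,
    F = {x | x ∈ P ∧ ∀ p ∈ P, u p ≤ u x})

/-- The dimension of (the affine span of) a face. -/
noncomputable def faceDim {n : ℕ} (F : Set (Fin n → ℝ)) : ℕ :=
  Module.finrank ℝ (affineSpan ℝ F).direction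

/-- A polytope `P ⊂ ℝ^n` is simple if every vertex (`0`-dimensional face) lies on
exactly `n` edges (`1`-dimensional faces). -/
def IsSimple {n : ℕ} (P : Set (Fin n → ℝ)) : Prop :=
  ∀ v, IsFaceOf P v → faceDim v = 0 →
    {E | IsFaceOf P E ∧ faceDim E = 1 ∧ v ⊆ E}.ncard = n

/-! ### The local structure of a simple polytope -/

/-- A simple polytope presented by its vertices `V`, the affine functions `x ↦ α i x + b i` cutting
out its facets (labelled by `ι`), and an integral edge vector `u v i` for each vertex `v` and facet
`i ∋ v`, pointing along the edge at `v` that leaves the facet `i`. -/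
structure SimpleData (n : ℕ) (ι : Type) where
  P : Set (Fin n → ℝ)
  V : Finset (Fin n → ℝ)
  J : (Fin n → ℝ) → Finset ι
  α : ι → (Fin n → ℝ) →ₗ[ℝ] ℝ
  b : ι → ℝ
  u : (Fin n → ℝ) → ι → (Fin n → ℝ)
  convex : Convex ℝ P
  compact : IsCompact P
  nonneg : ∀ x ∈ P, ∀ i, 0 ≤ α i x + b i
  extreme : ∀ v ∈ V, v ∈ P.extremePoints ℝ
  mem_J : ∀ v ∈ V, ∀ i, i ∈ J v ↔ α i v + b i = 0
  card_J : ∀ v ∈ V, (J v).card = n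
  u_pos : ∀ v ∈ V, ∀ i ∈ J v, 0 < α i (u v i)
  u_zero : ∀ v ∈ V, ∀ i ∈ J v, ∀ j ∈ J v, j ≠ i → α j (u v i) = 0
  edge : ∀ v ∈ V, ∀ i ∈ J v, v + u v i ∈ P
  exists_max : ∀ v ∈ V, ∀ K ⊆ J v, ∀ ξ : (Fin n → ℝ) →ₗ[ℝ] ℝ, ∃ w ∈ V, K ⊆ J w ∧
    ∀ x ∈ P, (∀ i ∈ K, α i x + b i = 0) → ξ x ≤ ξ w
  V_int : ∀ v ∈ V, ∃ m : Fin n → ℤ, v = intVec m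
  u_int : ∀ v ∈ V, ∀ i ∈ J v, ∃ m : Fin n → ℤ, u v i = intVec m

namespace SimpleData

variable {n : ℕ} {ι : Type} (D : SimpleData n ι)

/-- The facet functionals at a vertex are jointly injective, because the edge vectors at the vertex
form a basis dual to them up to scaling. -/
lemma eq_zero_of_forall {v : Fin n → ℝ} (hv : v ∈ D.V) {z : Fin n → ℝ}
    (hz : ∀ i ∈ D.J v, D.α i z = 0) : z = 0 := by
  have hli : LinearIndependent ℝ (fun i : D.J v => D.u v i) := by
    rw [Fintype.linearIndependent_iff]
    intro g hg i
    have h := congrArg (D.α i) hg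
    rw [map_sum, map_zero, Finset.sum_eq_single i] at h
    · rw [map_smul, smul_eq_mul] at h
      exact (mul_eq_zero.mp h).resolve_right (D.u_pos v hv i i.2).ne'
    · intro j _ hj
      rw [map_smul, D.u_zero v hv j j.2 i i.2 (fun h => hj (Subtype.ext h.symm)), smul_zero]
    · simp
  have hspan := hli.span_eq_top_of_card_eq_finrank' (by simp [D.card_J v hv])
  have hmem : z ∈ Submodule.span ℝ (Set.range fun i : D.J v => D.u v i) := hspan ▸ trivial
  obtain ⟨c, rfl⟩ := (Submodule.mem_span_range_iff_exists_fun ℝ).mp hmem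
  refine Finset.sum_eq_zero fun i _ => ?_
  have h := hz i i.2
  rw [map_sum, Finset.sum_eq_single i] at h
  · rw [map_smul, smul_eq_mul] at h
    rw [(mul_eq_zero.mp h).resolve_right (D.u_pos v hv i i.2).ne', zero_smul]
  · intro j _ hj
    rw [map_smul, D.u_zero v hv j j.2 i i.2 (fun h => hj (Subtype.ext h.symm)), smul_zero]
  · simp

lemma expand {v : Fin n → ℝ} (hv : v ∈ D.V) (z : Fin n → ℝ) :
    z = ∑ i ∈ D.J v, (D.α i z / D.α i (D.u v i)) • D.u v i := by
  rw [← sub_eq_zero]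
  apply D.eq_zero_of_forall hv
  intro i hi
  rw [map_sub, map_sum, Finset.sum_eq_single i]
  · rw [map_smul, smul_eq_mul, div_mul_cancel₀ _ (D.u_pos v hv i hi).ne', sub_self]
  · intro j hj hji
    rw [map_smul, D.u_zero v hv j hj i hi hji.symm, smul_zero]
  · intro h; exact absurd hi h

/-- A vector killed by all facet functionals at `v` but the `i`-th is parallel to the edge
`u v i`. -/
lemma eq_smul_of_forall {v : Fin n → ℝ} (hv : v ∈ D.V) {i : ι} (hi : i ∈ D.J v) {z : Fin n → ℝ}
    (hz : ∀ j ∈ D.J v, j ≠ i → D.α j z = 0) : z = (D.α i z / D.α i (D.u v i)) • D.u v i := by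
  conv_lhs => rw [D.expand hv z]
  rw [Finset.sum_eq_single i]
  · intro j hj hji
    rw [hz j hj hji, zero_div, zero_smul]
  · intro h; exact absurd hi h

lemma u_ne_zero {v : Fin n → ℝ} (hv : v ∈ D.V) {i : ι} (hi : i ∈ D.J v) : D.u v i ≠ 0 := by
  intro h
  have := D.u_pos v hv i hi
  rw [h, map_zero] at this
  exact lt_irrefl _ this

/-- Distinct edges at a vertex are not parallel. -/
lemma eq_of_parallel {v : Fin n → ℝ} (hv : v ∈ D.V) {i j : ι} (hi : i ∈ D.J v) (hj : j ∈ D.J v)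
    {c : ℝ} (h : D.u v j = c • D.u v i) : j = i := by
  by_contra hne
  have h1 := D.u_pos v hv j hj
  rw [h, map_smul, D.u_zero v hv i hi j hj hne, smul_zero] at h1
  exact lt_irrefl _ h1

/-- `ξ` is generic if it vanishes on no edge. -/
def Generic (ξ : (Fin n → ℝ) →ₗ[ℝ] ℝ) : Prop := ∀ v ∈ D.V, ∀ i ∈ D.J v, ξ (D.u v i) ≠ 0

/-- No three vertices are collinear. -/
lemma collinear_unique {v w w' e : Fin n → ℝ} (hv : v ∈ D.V) (hw : w ∈ D.V) (hw' : w' ∈ D.V)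
    (h1 : w ≠ v) (h2 : w' ≠ v) {s t : ℝ} (hs : w - v = s • e) (ht : w' - v = t • e) : w = w' := by
  by_contra hne
  have hw2 : w = v + s • e := by rw [← hs]; abel
  have hw2' : w' = v + t • e := by rw [← ht]; abel
  have hs0 : s ≠ 0 := by rintro rfl; apply h1; simpa using hw2
  have ht0 : t ≠ 0 := by rintro rfl; apply h2; simpa using hw2'
  have hst : s ≠ t := by rintro rfl; exact hne (hw2.trans hw2'.symm)
  have key : ∀ (a b c : Fin n → ℝ), a ∈ D.V → b ∈ D.V → c ∈ D.V → ∀ r : ℝ, 0 < r → r < 1 →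
      c = (1 - r) • a + r • b → a ≠ c → False := by
    intro a b c ha hb hc r hr0 hr1 hcr hac
    have := D.extreme c hc
    rw [mem_extremePoints] at this
    exact hac (this.2 a (D.extreme a ha).1 b (D.extreme b hb).1
      ⟨1 - r, r, by linarith, hr0, by ring, hcr.symm⟩).1
  rcases lt_trichotomy 0 s with hs1 | hs1 | hs1
  · rcases lt_trichotomy 0 t with ht1 | ht1 | ht1
    · rcases lt_or_gt_of_ne hst with h | h
      · refine key v w' w hv hw' hw (s / t) (by positivity) ((div_lt_one ht1).2 h) ?_ h1.symm
        rw [hw2, hw2']; ext k; simp; field_simp; ring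
      · refine key v w w' hv hw hw' (t / s) (by positivity) ((div_lt_one hs1).2 h) ?_ h2.symm
        rw [hw2, hw2']; ext k; simp; field_simp; ring
    · exact ht0 ht1.symm
    · have : s - t > 0 := by linarith
      refine key w w' v hw hw' hv (s / (s - t)) (by positivity)
        ((div_lt_one this).2 (by linarith)) ?_ h1
      rw [hw2, hw2']; ext k; simp; field_simp; ring
  · exact hs0 hs1.symm
  · rcases lt_trichotomy 0 t with ht1 | ht1 | ht1
    · have : t - s > 0 := by linarith
      refine key w' w v hw' hw hv (t / (t - s)) (by positivity)
        ((div_lt_one this).2 (by linarith)) ?_ h2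
      rw [hw2, hw2']; ext k; simp; field_simp; ring
    · exact ht0 ht1.symm
    · rcases lt_or_gt_of_ne hst with h | h
      · refine key v w w' hv hw hw' (t / s) (div_pos_of_neg_of_neg ht1 hs1)
          ((div_lt_one_of_neg hs1).2 h) ?_ h2.symm
        rw [hw2, hw2']; ext k; simp; field_simp; ring
      · refine key v w' w hv hw' hw (s / t) (div_pos_of_neg_of_neg hs1 ht1)
          ((div_lt_one_of_neg ht1).2 h) ?_ h1.symm
        rw [hw2, hw2']; ext k; simp; field_simp; ring

/-- The other endpoint `w` of the edge at `v` leaving the facet `i`: it lies on the same facets as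
`v` except that `i` is exchanged for some `k`, and its own edge leaving `k` points back. -/
lemma exists_adjacent {v : Fin n → ℝ} (hv : v ∈ D.V) {i : ι} (hi : i ∈ D.J v) :
    ∃ w ∈ D.V, w ≠ v ∧ (∃ s : ℝ, w - v = s • D.u v i) ∧ ∃ k ∈ D.J w,
      (D.J w).erase k = (D.J v).erase i ∧ ∃ μ : ℝ, μ < 0 ∧ D.u w k = μ • D.u v i := by
  obtain ⟨w, hw, hJ, hmax⟩ := D.exists_max v hv ((D.J v).erase i) (Finset.erase_subset _ _) (D.α i)
  have hvz : ∀ j ∈ D.J v, D.α j v + D.b j = 0 := fun j hj => (D.mem_J v hv j).1 hj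
  have hwz : ∀ j ∈ D.J w, D.α j w + D.b j = 0 := fun j hj => (D.mem_J w hw j).1 hj
  have h1 := hmax _ (D.edge v hv i hi) (by
    intro j hj
    rw [Finset.mem_erase] at hj
    rw [map_add, D.u_zero v hv i hi j hj.2 hj.1, add_zero, hvz j hj.2])
  rw [map_add] at h1
  have hup := D.u_pos v hv i hi
  have hwv : w ≠ v := by rintro rfl; linarith
  have hdiff : w - v = (D.α i (w - v) / D.α i (D.u v i)) • D.u v i := by
    apply D.eq_smul_of_forall hv hi
    intro j hj hji
    have e1 := hvz j hj
    have e2 := hwz j (hJ (Finset.mem_erase.2 ⟨hji, hj⟩))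
    rw [map_sub]; linarith
  set s := D.α i (w - v) / D.α i (D.u v i) with hs
  have hspos : 0 < s := by
    apply div_pos _ hup
    rw [map_sub]; linarith
  have hiw : i ∉ D.J w := by
    intro h
    have e1 := hvz i hi
    have e2 := hwz i h
    linarith
  have hcard : ((D.J w) \ (D.J v).erase i).card = 1 := by
    have e0 : 0 < (D.J v).card := Finset.card_pos.2 ⟨i, hi⟩
    rw [Finset.card_sdiff_of_subset hJ, Finset.card_erase_of_mem hi, D.card_J v hv, D.card_J w hw]
    rw [D.card_J v hv] at e0
    omega
  obtain ⟨k, hk⟩ := Finset.card_eq_one.1 hcard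
  have hk' : k ∈ D.J w \ (D.J v).erase i := by rw [hk]; simp
  rw [Finset.mem_sdiff] at hk'
  have herase : (D.J w).erase k = (D.J v).erase i := by
    rw [← Finset.sdiff_singleton_eq_erase k, ← hk, Finset.sdiff_sdiff_eq_self hJ]
  have hkv : k ∉ D.J v := by
    intro h
    apply hk'.2
    refine Finset.mem_erase.2 ⟨?_, h⟩
    rintro rfl
    exact hiw hk'.1
  refine ⟨w, hw, hwv, ⟨s, hdiff⟩, k, hk'.1, herase, ?_⟩
  have hpar : D.u w k = (D.α i (D.u w k) / D.α i (D.u v i)) • D.u v i := by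
    apply D.eq_smul_of_forall hv hi
    intro j hj hji
    have : j ∈ (D.J w).erase k := by rw [herase]; exact Finset.mem_erase.2 ⟨hji, hj⟩
    rw [Finset.mem_erase] at this
    exact D.u_zero w hw k hk'.1 j this.2 this.1
  refine ⟨_, ?_, hpar⟩
  set μ := D.α i (D.u w k) / D.α i (D.u v i) with hμ
  have hkpos := D.u_pos w hw k hk'.1
  rw [hpar, map_smul, smul_eq_mul] at hkpos
  have hav : 0 < D.α k v + D.b k :=
    lt_of_le_of_ne (D.nonneg v (D.extreme v hv).1 k) (fun h => hkv ((D.mem_J v hv k).2 h.symm))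
  have haw := hwz k hk'.1
  have h3 : D.α k (w - v) < 0 := by rw [map_sub]; linarith
  rw [hdiff, map_smul, smul_eq_mul] at h3
  have h4 : D.α k (D.u v i) < 0 := by
    by_contra h; push Not at h
    nlinarith
  by_contra h; push Not at h
  nlinarith

end SimpleData

/-! ### Polar decomposition of a face -/

/-- The indicator of the ray `s ≥ 0` if `c < 0`, and minus the indicator of the complementary ray
`s < 0` otherwise. If `c ≠ 0`, the ray is one along which `s ↦ exp (c s)` decays. -/
def flipInd (c s : ℝ) : ℂ := if c < 0 then (if 0 ≤ s then 1 else 0) else (if s < 0 then -1 else 0)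

lemma flipInd_congr {c c' : ℝ} (h : c < 0 ↔ c' < 0) (s : ℝ) : flipInd c s = flipInd c' s := by
  unfold flipInd; simp only [h]

lemma flipInd_sub {c c' : ℝ} (hc : c < 0) (hc' : 0 < c') (s : ℝ) :
    flipInd c s - flipInd c' s = 1 := by
  unfold flipInd
  rw [if_pos hc, if_neg (not_lt.2 hc'.le)]
  by_cases h : 0 ≤ s
  · rw [if_pos h, if_neg (not_lt.2 h), sub_zero]
  · rw [if_neg h, if_pos (not_le.1 h)]; norm_num

namespace SimpleData

variable {n : ℕ} {ι : Type} (D : SimpleData n ι)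

/-- The signed sum, over the vertices `v` of the face cut out by the facets in `K`, of the
indicators of the cones of that face at `v`, each flipped so that `ξ` is bounded above on it. -/
def polar (ξ : (Fin n → ℝ) →ₗ[ℝ] ℝ) (K : Finset ι) (x : Fin n → ℝ) : ℂ :=
  ∑ v ∈ D.V with K ⊆ D.J v, ∏ i ∈ D.J v \ K, flipInd (ξ (D.u v i)) (D.α i x + D.b i)

lemma sign_iff_of_not_neg {a b : ℝ} (ha : a ≠ 0) (hb : b ≠ 0) (h : ¬ a * b < 0) :
    a < 0 ↔ b < 0 := by
  rcases lt_or_gt_of_ne ha with ha | ha <;> rcases lt_or_gt_of_ne hb with hb | hb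
  · simp [ha, hb]
  · exact absurd (mul_neg_of_neg_of_pos ha hb) h
  · exact absurd (mul_neg_of_pos_of_neg ha hb) h
  · exact iff_of_false (not_lt.2 ha.le) (not_lt.2 hb.le)

/-- Wall crossing: if all edges on which `ξ` and `ξ'` have different signs are parallel, then the
polar sums agree, because the changes at the two ends of such an edge cancel. -/
lemma polar_wall {ξ ξ' : (Fin n → ℝ) →ₗ[ℝ] ℝ} (hξ : D.Generic ξ) (hξ' : D.Generic ξ')
    (e : Fin n → ℝ) (hpar : ∀ v ∈ D.V, ∀ i ∈ D.J v, ξ (D.u v i) * ξ' (D.u v i) < 0 →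
      ∃ c : ℝ, D.u v i = c • e) (K : Finset ι) (x : Fin n → ℝ) :
    D.polar ξ K x = D.polar ξ' K x := by
  rw [← sub_eq_zero, polar, polar, ← Finset.sum_sub_distrib]
  set g : (Fin n → ℝ) → ℂ := fun v =>
    ∏ i ∈ D.J v \ K, flipInd (ξ (D.u v i)) (D.α i x + D.b i) -
    ∏ i ∈ D.J v \ K, flipInd (ξ' (D.u v i)) (D.α i x + D.b i) with hg
  set W := (D.V.filter (fun v => K ⊆ D.J v)).filter
    (fun v => ∃ i ∈ D.J v \ K, ξ (D.u v i) * ξ' (D.u v i) < 0) with hW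
  have hzero : ∑ v ∈ D.V with K ⊆ D.J v, g v = ∑ v ∈ W, g v := by
    symm
    apply Finset.sum_subset (Finset.filter_subset _ _)
    intro v hv hvW
    have hv' := Finset.mem_filter.1 hv
    rw [hg]
    simp only
    rw [sub_eq_zero]
    apply Finset.prod_congr rfl
    intro i hi
    apply flipInd_congr
    have hi' := (Finset.mem_sdiff.1 hi).1
    apply sign_iff_of_not_neg (hξ v hv'.1 i hi') (hξ' v hv'.1 i hi')
    intro hneg
    exact hvW (Finset.mem_filter.2 ⟨hv, i, hi, hneg⟩)
  change ∑ v ∈ D.V with K ⊆ D.J v, g v = 0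
  rw [hzero]
  have main : ∀ v ∈ W, ∃ w ∈ W, w ≠ v ∧ (∃ s : ℝ, w - v = s • e) ∧ g v + g w = 0 := by
    intro v hvW
    obtain ⟨hvK, i, hi, hneg⟩ := Finset.mem_filter.1 hvW
    obtain ⟨hv, hKv⟩ := Finset.mem_filter.1 hvK
    obtain ⟨hiJ, hiK⟩ := Finset.mem_sdiff.1 hi
    obtain ⟨w, hw, hwv, ⟨s, hs⟩, k, hk, herase, μ, hμ, hu⟩ := D.exists_adjacent hv hiJ
    obtain ⟨c, hc⟩ := hpar v hv i hiJ hneg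
    have hc0 : c ≠ 0 := by
      rintro rfl
      exact D.u_ne_zero hv hiJ (by rw [hc, zero_smul])
    have he : e = c⁻¹ • D.u v i := by rw [hc, smul_smul, inv_mul_cancel₀ hc0, one_smul]
    have hK' : K ⊆ (D.J w).erase k := by
      rw [herase]
      intro j hj
      refine Finset.mem_erase.2 ⟨?_, hKv hj⟩
      rintro rfl
      exact hiK hj
    have hkK : k ∉ K := fun h => Finset.notMem_erase k _ (hK' h)
    have hKw : K ⊆ D.J w := hK'.trans (Finset.erase_subset _ _)
    have hprod : ξ (D.u w k) * ξ' (D.u w k) < 0 := by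
      rw [hu, map_smul, map_smul, smul_eq_mul, smul_eq_mul]
      have : 0 < μ * μ := by nlinarith
      nlinarith
    refine ⟨w, ?_, hwv, ⟨s * c, by rw [hs, hc, smul_smul]⟩, ?_⟩
    · exact Finset.mem_filter.2 ⟨Finset.mem_filter.2 ⟨hw, hKw⟩, k,
        Finset.mem_sdiff.2 ⟨hk, hkK⟩, hprod⟩
    have hJv : D.J v \ K = insert i ((D.J v).erase i \ K) := by
      rw [← Finset.insert_sdiff_of_notMem _ hiK, Finset.insert_erase hiJ]
    have hJw : D.J w \ K = insert k ((D.J v).erase i \ K) := by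
      rw [← herase, ← Finset.insert_sdiff_of_notMem _ hkK, Finset.insert_erase hk]
    set Cm := (D.J v).erase i \ K with hCm
    have hiC : i ∉ Cm := by simp [hCm]
    have hkC : k ∉ Cm := by rw [hCm, ← herase]; simp
    -- signs on the edges shared (modulo the edge itself) by the two endpoints
    have hsame : ∀ j ∈ Cm, (ξ (D.u v j) < 0 ↔ ξ' (D.u v j) < 0) ∧
        (ξ (D.u w j) < 0 ↔ ξ' (D.u w j) < 0) ∧ (ξ (D.u v j) < 0 ↔ ξ (D.u w j) < 0) := by
      intro j hj
      have hjE := (Finset.mem_sdiff.1 hj).1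
      have hjv := Finset.mem_erase.1 hjE
      have hjw := Finset.mem_erase.1 (herase ▸ hjE)
      have s1 : ξ (D.u v j) < 0 ↔ ξ' (D.u v j) < 0 := by
        apply sign_iff_of_not_neg (hξ v hv j hjv.2) (hξ' v hv j hjv.2)
        intro h
        obtain ⟨c', hc'⟩ := hpar v hv j hjv.2 h
        exact hjv.1 (D.eq_of_parallel hv hiJ hjv.2 (c := c' * c⁻¹) (by rw [hc', he, smul_smul]))
      have s2 : ξ (D.u w j) < 0 ↔ ξ' (D.u w j) < 0 := by
        apply sign_iff_of_not_neg (hξ w hw j hjw.2) (hξ' w hw j hjw.2)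
        intro h
        obtain ⟨c', hc'⟩ := hpar w hw j hjw.2 h
        refine hjw.1 (D.eq_of_parallel hw hk hjw.2 (c := c' * c⁻¹ * μ⁻¹) ?_)
        rw [hc', he, hu, smul_smul, smul_smul, mul_assoc (c' * c⁻¹), inv_mul_cancel₀ hμ.ne, mul_one]
      refine ⟨s1, s2, ?_⟩
      have hcc : 0 < D.α j (D.u w j) / D.α j (D.u v j) :=
        div_pos (D.u_pos w hw j hjw.2) (D.u_pos v hv j hjv.2)
      set cc := D.α j (D.u w j) / D.α j (D.u v j) with hccdef
      have hz : D.u w j - cc • D.u v j =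
          (D.α i (D.u w j - cc • D.u v j) / D.α i (D.u v i)) • D.u v i := by
        apply D.eq_smul_of_forall hv hiJ
        intro l hl hli
        have hlw : l ∈ (D.J w).erase k := by rw [herase]; exact Finset.mem_erase.2 ⟨hli, hl⟩
        have hlw' := Finset.mem_erase.1 hlw
        rw [map_sub, map_smul, smul_eq_mul]
        by_cases hlj : l = j
        · subst hlj
          rw [hccdef, div_mul_cancel₀ _ (D.u_pos v hv l hl).ne', sub_self]
        · rw [D.u_zero w hw j hjw.2 l hlw'.2 hlj, D.u_zero v hv j hjv.2 l hl hlj]; ring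
      set lam := D.α i (D.u w j - cc • D.u v j) / D.α i (D.u v i)
      have e1 := congrArg ξ hz
      have e2 := congrArg ξ' hz
      simp only [map_sub, map_smul, smul_eq_mul] at e1 e2
      have n1 := hξ v hv j hjv.2
      have n2 := hξ w hw j hjw.2
      have n1' := hξ' v hv j hjv.2
      have n2' := hξ' w hw j hjw.2
      revert e1 e2 n1 n2 n1' n2' s1 s2 hneg
      generalize ξ (D.u v j) = B, ξ' (D.u v j) = B', ξ (D.u w j) = A, ξ' (D.u w j) = A',
        ξ (D.u v i) = p, ξ' (D.u v i) = p'
      intro hneg s1 s2 e1 e2 n1 n2 n1' n2'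
      have hrel : p' * A - p * A' = cc * (p' * B - p * B') := by
        have : p' * (A - cc * B) = p * (A' - cc * B') := by rw [e1, e2]; ring
        linarith
      by_contra hcon
      rw [not_iff] at hcon
      rcases lt_or_gt_of_ne n1 with hB | hB
      · have hB' := s1.1 hB
        have hA : 0 < A := lt_of_le_of_ne (not_lt.1 (fun h => (hcon.2 h) hB)) n2.symm
        have hA' : 0 < A' := lt_of_le_of_ne (not_lt.1 (fun h => (hcon.2 (s2.2 h)) hB)) n2'.symm
        rcases mul_neg_iff.1 hneg with ⟨hp, hp'⟩ | ⟨hp, hp'⟩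
        · have t1 : p' * A - p * A' < 0 := by nlinarith
          have t2 : 0 < p' * B - p * B' := by nlinarith
          nlinarith
        · have t1 : 0 < p' * A - p * A' := by nlinarith
          have t2 : p' * B - p * B' < 0 := by nlinarith
          nlinarith
      · have hA : A < 0 := hcon.1 (not_lt.2 hB.le)
        have hA' := s2.1 hA
        have hB' : 0 < B' := lt_of_le_of_ne (not_lt.1 (fun h => absurd (s1.2 h) (not_lt.2 hB.le)))
          n1'.symm
        rcases mul_neg_iff.1 hneg with ⟨hp, hp'⟩ | ⟨hp, hp'⟩
        · have t1 : 0 < p' * A - p * A' := by nlinarith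
          have t2 : p' * B - p * B' < 0 := by nlinarith
          nlinarith
        · have t1 : p' * A - p * A' < 0 := by nlinarith
          have t2 : 0 < p' * B - p * B' := by nlinarith
          nlinarith
    have q1 : ∏ j ∈ Cm, flipInd (ξ' (D.u v j)) (D.α j x + D.b j) =
        ∏ j ∈ Cm, flipInd (ξ (D.u v j)) (D.α j x + D.b j) :=
      Finset.prod_congr rfl fun j hj => flipInd_congr (hsame j hj).1.symm _
    have q2 : ∏ j ∈ Cm, flipInd (ξ (D.u w j)) (D.α j x + D.b j) =
        ∏ j ∈ Cm, flipInd (ξ (D.u v j)) (D.α j x + D.b j) :=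
      Finset.prod_congr rfl fun j hj => flipInd_congr (hsame j hj).2.2.symm _
    have q3 : ∏ j ∈ Cm, flipInd (ξ' (D.u w j)) (D.α j x + D.b j) =
        ∏ j ∈ Cm, flipInd (ξ (D.u v j)) (D.α j x + D.b j) := by
      rw [← q2]
      exact Finset.prod_congr rfl fun j hj => flipInd_congr (hsame j hj).2.1.symm _
    simp only [hg]
    rw [hJv, hJw, Finset.prod_insert hiC, Finset.prod_insert hiC, Finset.prod_insert hkC,
      Finset.prod_insert hkC, q1, q2, q3, ← sub_mul, ← sub_mul, ← add_mul]
    suffices h : flipInd (ξ (D.u v i)) (D.α i x + D.b i) - flipInd (ξ' (D.u v i)) (D.α i x + D.b i)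
        + (flipInd (ξ (D.u w k)) (D.α k x + D.b k) - flipInd (ξ' (D.u w k)) (D.α k x + D.b k))
        = 0 by rw [h, zero_mul]
    rw [hu, map_smul, map_smul, smul_eq_mul, smul_eq_mul]
    rcases mul_neg_iff.1 hneg with ⟨hp, hp'⟩ | ⟨hp, hp'⟩
    · rw [flipInd_sub (mul_neg_of_neg_of_pos hμ hp) (mul_pos_of_neg_of_neg hμ hp'), ← neg_sub,
        flipInd_sub hp' hp, neg_add_cancel]
    · rw [flipInd_sub hp hp', ← neg_sub (flipInd (μ * ξ' (D.u v i)) _),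
        flipInd_sub (mul_neg_of_neg_of_pos hμ hp') (mul_pos_of_neg_of_neg hμ hp), add_neg_cancel]
  choose! σ hσ using main
  refine Finset.sum_involution (fun v _ => σ v) (fun v hv => (hσ v hv).2.2.2)
    (fun v hv _ => (hσ v hv).2.1) (fun v hv => (hσ v hv).1) ?_
  intro v hv
  obtain ⟨hw, hwv, ⟨s, hs⟩, -⟩ := hσ v hv
  obtain ⟨hw2, hwv2, ⟨s2, hs2⟩, -⟩ := hσ _ hw
  have memV : ∀ z ∈ W, z ∈ D.V := fun z hz =>
    (Finset.mem_filter.1 (Finset.mem_filter.1 hz).1).1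
  exact D.collinear_unique (memV _ hw) (memV _ hw2) (memV _ hv) hwv2 hwv.symm hs2
    (t := -s) (by rw [neg_smul, ← hs, neg_sub])

end SimpleData

/-- Finitely many nonzero vectors are avoided by the kernel of some functional. -/
lemma exists_functional_ne_zero {n : ℕ} (W : Finset (Fin n → ℝ)) (hW : ∀ w ∈ W, w ≠ 0) :
    ∃ ζ : (Fin n → ℝ) →ₗ[ℝ] ℝ, ∀ w ∈ W, ζ w ≠ 0 := by
  obtain ⟨f, hf⟩ := Module.exists_dual_forall_apply_ne_zero (K := ℝ) (fun w : W => (w : Fin n → ℝ))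
    (fun w => hW w w.2)
  exact ⟨f, fun w hw => hf ⟨w, hw⟩⟩

namespace SimpleData

variable {n : ℕ} {ι : Type} (D : SimpleData n ι)

/-- The finite set of all edge vectors. -/
def edges : Finset (Fin n → ℝ) := D.V.biUnion fun v => (D.J v).image (D.u v)

lemma mem_edges {v : Fin n → ℝ} (hv : v ∈ D.V) {i : ι} (hi : i ∈ D.J v) : D.u v i ∈ D.edges :=
  Finset.mem_biUnion.2 ⟨v, hv, Finset.mem_image_of_mem _ hi⟩

lemma edges_ne_zero : ∀ e ∈ D.edges, e ≠ 0 := by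
  intro e he
  obtain ⟨v, hv, he⟩ := Finset.mem_biUnion.1 he
  obtain ⟨i, hi, rfl⟩ := Finset.mem_image.1 he
  exact D.u_ne_zero hv hi

lemma generic_iff {ξ : (Fin n → ℝ) →ₗ[ℝ] ℝ} : D.Generic ξ ↔ ∀ e ∈ D.edges, ξ e ≠ 0 := by
  constructor
  · intro h e he
    obtain ⟨v, hv, he⟩ := Finset.mem_biUnion.1 he
    obtain ⟨i, hi, rfl⟩ := Finset.mem_image.1 he
    exact h v hv i hi
  · exact fun h v hv i hi => h _ (D.mem_edges hv hi)

/-- Moving `ξ₀` to `ξ₁` along a segment on which non-parallel edges never vanish simultaneously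
does not change the polar sum. -/
lemma polar_path (K : Finset ι) (x : Fin n → ℝ) (ξ₁ : (Fin n → ℝ) →ₗ[ℝ] ℝ) (h₁ : D.Generic ξ₁)
    (N : ℕ) : ∀ ξ₀ : (Fin n → ℝ) →ₗ[ℝ] ℝ, D.Generic ξ₀ →
    (∀ e ∈ D.edges, ∀ e' ∈ D.edges, ξ₀ e * ξ₁ e' = ξ₀ e' * ξ₁ e → ∃ c : ℝ, e' = c • e) →
    (D.edges.filter fun e => ξ₀ e * ξ₁ e < 0).card ≤ N → D.polar ξ₀ K x = D.polar ξ₁ K x := by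
  induction N with
  | zero =>
    intro ξ₀ h₀ _ hcard
    rw [Nat.le_zero, Finset.card_eq_zero, Finset.filter_eq_empty_iff] at hcard
    exact D.polar_wall h₀ h₁ 0 (fun v hv i hi h => absurd h (hcard (D.mem_edges hv hi))) K x
  | succ N ih =>
    intro ξ₀ h₀ hpar hcard
    have g₀ := D.generic_iff.1 h₀
    have g₁ := D.generic_iff.1 h₁
    set X := D.edges.filter fun e => ξ₀ e * ξ₁ e < 0 with hX
    by_cases hne : X.Nonempty
    swap
    · refine D.polar_wall h₀ h₁ 0 (fun v hv i hi h => ?_) K x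
      exact absurd ⟨_, Finset.mem_filter.2 ⟨D.mem_edges hv hi, h⟩⟩ hne
    -- `τ e` is the time at which the segment crosses the wall of `e`
    set τ : (Fin n → ℝ) → ℝ := fun e => ξ₀ e / (ξ₀ e - ξ₁ e) with hτ
    obtain ⟨e₀, he₀, hmin⟩ := Finset.exists_min_image X τ hne
    have hd : ∀ e ∈ X, ξ₀ e - ξ₁ e ≠ 0 ∧ 0 < (ξ₀ e - ξ₁ e) * ξ₀ e ∧
        (ξ₀ e - ξ₁ e) * ξ₁ e < 0 := by
      intro e he
      have := (Finset.mem_filter.1 he).2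
      have a1 : 0 < (ξ₀ e - ξ₁ e) * ξ₀ e := by nlinarith [sq_nonneg (ξ₀ e)]
      refine ⟨?_, a1, by nlinarith [sq_nonneg (ξ₁ e)]⟩
      intro h
      rw [h, zero_mul] at a1
      exact lt_irrefl _ a1
    have hτeq : ∀ e ∈ X, ξ₀ e = (ξ₀ e - ξ₁ e) * τ e := fun e he => by
      simp only [hτ]
      rw [mul_div_cancel₀ _ (hd e he).1]
    have hτ1 : ∀ e ∈ X, τ e < 1 := by
      intro e he
      by_contra h
      push Not at h
      have a := hτeq e he
      obtain ⟨b0, b, c⟩ := hd e he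
      have b1 : 0 < (ξ₀ e - ξ₁ e) ^ 2 := by positivity
      have : ξ₁ e = (ξ₀ e - ξ₁ e) * (τ e - 1) := by linarith
      have e2 : (ξ₀ e - ξ₁ e) * ξ₁ e = (ξ₀ e - ξ₁ e) ^ 2 * (τ e - 1) := by
        calc _ = (ξ₀ e - ξ₁ e) * ((ξ₀ e - ξ₁ e) * (τ e - 1)) := by rw [← this]
          _ = _ := by ring
      rw [e2] at c
      exact absurd c (not_lt.2 (mul_nonneg b1.le (sub_nonneg.2 h)))
    have hτ0 : ∀ e ∈ X, 0 < τ e := by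
      intro e he
      by_contra h
      push Not at h
      have a := hτeq e he
      obtain ⟨b0, b, c⟩ := hd e he
      have b1 : 0 < (ξ₀ e - ξ₁ e) ^ 2 := by positivity
      have e2 : (ξ₀ e - ξ₁ e) * ξ₀ e = (ξ₀ e - ξ₁ e) ^ 2 * τ e := by
        calc _ = (ξ₀ e - ξ₁ e) * ((ξ₀ e - ξ₁ e) * τ e) := by rw [← a]
          _ = _ := by ring
      rw [e2] at b
      exact absurd b (not_lt.2 (mul_nonpos_of_nonneg_of_nonpos b1.le h))
    have hs : ∃ s, τ e₀ < s ∧ s < 1 ∧ ∀ e ∈ X, τ e ≤ τ e₀ ∨ s < τ e := by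
      have hev : ∀ᶠ s in nhdsWithin (τ e₀) (Set.Ioi (τ e₀)),
          τ e₀ < s ∧ s < 1 ∧ ∀ e ∈ X, τ e ≤ τ e₀ ∨ s < τ e := by
        refine (eventually_mem_nhdsWithin).and (Filter.Eventually.and ?_ ?_)
        · exact Filter.Eventually.filter_mono nhdsWithin_le_nhds (eventually_lt_nhds (hτ1 e₀ he₀))
        · rw [Filter.eventually_all_finset]
          intro e he
          by_cases h : τ e ≤ τ e₀
          · exact Filter.Eventually.of_forall fun _ => Or.inl h
          · refine Filter.Eventually.mono ?_ fun _ h => Or.inr h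
            exact Filter.Eventually.filter_mono nhdsWithin_le_nhds
              (eventually_lt_nhds (not_le.1 h))
      exact hev.exists
    obtain ⟨s, hs0, hs1, hsX⟩ := hs
    have hspos : 0 < s := (hτ0 e₀ he₀).trans hs0
    set ξs : (Fin n → ℝ) →ₗ[ℝ] ℝ := (1 - s) • ξ₀ + s • ξ₁ with hξs
    have hξse : ∀ e, ξs e = (1 - s) * ξ₀ e + s * ξ₁ e := fun e => by
      simp [hξs]
    have hξsX : ∀ e ∈ X, ξs e = (ξ₀ e - ξ₁ e) * (τ e - s) := fun e he => by
      rw [hξse]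
      linarith [hτeq e he]
    have hnot : ∀ e ∈ D.edges, e ∉ X → 0 < ξ₀ e * ξs e := by
      intro e he heX
      have h : 0 < ξ₀ e * ξ₁ e := by
        apply lt_of_le_of_ne
        · by_contra h
          exact heX (Finset.mem_filter.2 ⟨he, not_le.1 h⟩)
        · exact (mul_ne_zero (g₀ e he) (g₁ e he)).symm
      rw [hξse]
      have : 0 < ξ₀ e ^ 2 := by have := g₀ e he; positivity
      nlinarith
    have hgs : D.Generic ξs := by
      rw [D.generic_iff]
      intro e he
      by_cases heX : e ∈ X
      · rw [hξsX e heX]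
        apply mul_ne_zero (hd e heX).1
        rcases hsX e heX with h | h <;> intro h' <;> linarith
      · intro h
        have := hnot e he heX
        rw [h, mul_zero] at this
        exact lt_irrefl _ this
    have step1 : D.polar ξ₀ K x = D.polar ξs K x := by
      refine D.polar_wall h₀ hgs e₀ (fun v hv i hi h => ?_) K x
      have he := D.mem_edges hv hi
      by_cases heX : D.u v i ∈ X
      swap
      · exact absurd h (not_lt.2 (hnot _ he heX).le)
      generalize D.u v i = e at *
      apply hpar e₀ (Finset.mem_filter.1 he₀).1 e he
      have hle : τ e ≤ τ e₀ := by
        rcases hsX e heX with h' | h'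
        · exact h'
        · exfalso
          rw [hξsX e heX] at h
          have := (hd e heX).2.1
          have h2 : 0 < τ e - s := by linarith
          nlinarith
      have heq : τ e = τ e₀ := le_antisymm hle (hmin e heX)
      have a1 := hτeq e heX
      have a2 := hτeq e₀ he₀
      rw [heq] at a1
      have : ξ₀ e * (ξ₀ e₀ - ξ₁ e₀) = ξ₀ e₀ * (ξ₀ e - ξ₁ e) := by
        calc _ = (ξ₀ e - ξ₁ e) * τ e₀ * (ξ₀ e₀ - ξ₁ e₀) := by rw [← a1]
          _ = ((ξ₀ e₀ - ξ₁ e₀) * τ e₀) * (ξ₀ e - ξ₁ e) := by ring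
          _ = _ := by rw [← a2]
      linarith
    rw [step1]
    apply ih ξs hgs
    · intro e he e' he' h
      apply hpar e he e' he'
      rw [hξse, hξse] at h
      have h2 : (1 - s) * (ξ₀ e * ξ₁ e') = (1 - s) * (ξ₀ e' * ξ₁ e) := by linarith
      exact mul_left_cancel₀ (by linarith) h2
    · have hsub : (D.edges.filter fun e => ξs e * ξ₁ e < 0) ⊆ X.erase e₀ := by
        intro e he
        obtain ⟨heE, hlt⟩ := Finset.mem_filter.1 he
        refine Finset.mem_erase.2 ⟨?_, Finset.mem_filter.2 ⟨heE, ?_⟩⟩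
        · rintro rfl
          rw [hξsX e he₀] at hlt
          have := (hd e he₀).2.2
          nlinarith
        · rw [hξse] at hlt
          by_contra hcon
          push Not at hcon
          nlinarith [sq_nonneg (ξ₁ e), mul_nonneg hspos.le (sq_nonneg (ξ₁ e)),
            mul_nonneg (sub_nonneg.2 hs1.le) hcon]
      have := Finset.card_le_card hsub
      rw [Finset.card_erase_of_mem he₀] at this
      omega

/-- The polar decomposition of the indicator function of a face. -/
theorem polar_eq {ξ : (Fin n → ℝ) →ₗ[ℝ] ℝ} (hξ : D.Generic ξ) {v₀ : Fin n → ℝ} (hv₀ : v₀ ∈ D.V)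
    {K : Finset ι} (hK : K ⊆ D.J v₀) {x : Fin n → ℝ} (hx : ∀ i ∈ K, D.α i x + D.b i = 0) :
    D.polar ξ K x = if x ∈ D.P then 1 else 0 := by
  -- the coordinates of `x - v` in the basis of edges at `v`, evaluated on a functional
  have hexp : ∀ ζ : (Fin n → ℝ) →ₗ[ℝ] ℝ, ∀ v ∈ D.V, K ⊆ D.J v → ζ x - ζ v =
      ∑ i ∈ D.J v \ K, (D.α i x + D.b i) / D.α i (D.u v i) * ζ (D.u v i) := by
    intro ζ v hv hKv
    rw [← map_sub]
    conv_lhs => rw [D.expand hv (x - v)]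
    rw [map_sum, ← Finset.sum_sdiff hKv, add_eq_left.2]
    · refine Finset.sum_congr rfl fun i hi => ?_
      have := (D.mem_J v hv i).1 (Finset.mem_sdiff.1 hi).1
      rw [map_smul, smul_eq_mul, map_sub]
      congr 2
      linarith
    · refine Finset.sum_eq_zero fun i hi => ?_
      have h1 := (D.mem_J v hv i).1 (hKv hi)
      have h2 := hx i hi
      rw [map_sub, show D.α i x - D.α i v = 0 by linarith, zero_div, zero_smul, map_zero]
  by_cases hxP : x ∈ D.P
  · rw [if_pos hxP]
    obtain ⟨w, hw, hKw, hmax⟩ := D.exists_max v₀ hv₀ K hK ξ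
    have hwneg : ∀ i ∈ D.J w \ K, ξ (D.u w i) < 0 := by
      intro i hi
      obtain ⟨hi1, hi2⟩ := Finset.mem_sdiff.1 hi
      have h1 := hmax _ (D.edge w hw i hi1) (fun j hj => by
        have := (D.mem_J w hw j).1 (hKw hj)
        rw [map_add, D.u_zero w hw i hi1 j (hKw hj) (by rintro rfl; exact hi2 hj)]
        linarith)
      rw [map_add] at h1
      exact lt_of_le_of_ne (by linarith) (hξ w hw i hi1)
    rw [polar, Finset.sum_eq_single w]
    · apply Finset.prod_eq_one
      intro i hi
      rw [flipInd, if_pos (hwneg i hi), if_pos (D.nonneg x hxP i)]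
    · intro v hv hvw
      obtain ⟨hv, hKv⟩ := Finset.mem_filter.1 hv
      -- some edge at `v` must increase `ξ`, otherwise `v` would also be the maximum
      have : ∃ i ∈ D.J v \ K, 0 < ξ (D.u v i) := by
        by_contra hcon
        push Not at hcon
        apply hvw
        have hvmax : ∀ i ∈ D.J v \ K, ξ (D.u v i) < 0 := fun i hi =>
          lt_of_le_of_ne (hcon i hi) (hξ v hv i (Finset.mem_sdiff.1 hi).1)
        have hwz : ∀ i ∈ K, D.α i w + D.b i = 0 := fun i hi => (D.mem_J w hw i).1 (hKw hi)
        have hvz : ∀ i ∈ K, D.α i v + D.b i = 0 := fun i hi => (D.mem_J v hv i).1 (hKv hi)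
        have h1 := hmax v (D.extreme v hv).1 hvz
        have h2 : w - v = 0 := by
          apply D.eq_zero_of_forall hv
          have hs : ξ (w - v) = ∑ i ∈ D.J v,
              D.α i (w - v) / D.α i (D.u v i) * ξ (D.u v i) := by
            conv_lhs => rw [D.expand hv (w - v)]
            rw [map_sum]
            simp only [map_smul, smul_eq_mul]
          have hz : ∀ i ∈ K, D.α i (w - v) = 0 := fun i hi => by
            rw [map_sub]; linarith [hwz i hi, hvz i hi]
          have hn : ∀ i ∈ D.J v, 0 ≤ D.α i (w - v) := fun i hi => by
            rw [map_sub]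
            linarith [D.nonneg w (D.extreme w hw).1 i, (D.mem_J v hv i).1 hi]
          have hterm : ∀ i ∈ D.J v, D.α i (w - v) / D.α i (D.u v i) * ξ (D.u v i) ≤ 0 := by
            intro i hi
            by_cases hiK : i ∈ K
            · rw [hz i hiK]; simp
            · exact mul_nonpos_of_nonneg_of_nonpos (div_nonneg (hn i hi) (D.u_pos v hv i hi).le)
                (hvmax i (Finset.mem_sdiff.2 ⟨hi, hiK⟩)).le
          have hsum : ∑ i ∈ D.J v, D.α i (w - v) / D.α i (D.u v i) * ξ (D.u v i) = 0 := by
            apply le_antisymm (Finset.sum_nonpos hterm)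
            rw [← hs, map_sub]; linarith
          have hall := (Finset.sum_eq_zero_iff_of_nonpos hterm).1 hsum
          intro i hi
          by_cases hiK : i ∈ K
          · exact hz i hiK
          · have := hall i hi
            rw [mul_eq_zero, div_eq_zero_iff] at this
            rcases this with (h | h) | h
            · exact h
            · exact absurd h (D.u_pos v hv i hi).ne'
            · exact absurd h (hξ v hv i hi)
        exact (sub_eq_zero.1 h2).symm
      obtain ⟨i, hi, hpos⟩ := this
      apply Finset.prod_eq_zero hi
      rw [flipInd, if_neg (not_lt.2 hpos.le), if_neg (not_lt.2 (D.nonneg x hxP i))]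
    · intro h
      exact absurd (Finset.mem_filter.2 ⟨hw, hKw⟩) h
  · rw [if_neg hxP]
    -- a functional separating `x` from `P`, perturbed to be generic relative to `ξ`
    obtain ⟨f, hf⟩ : ∃ f : (Fin n → ℝ) →ₗ[ℝ] ℝ, ∀ v ∈ D.V, f v < f x := by
      obtain ⟨f, s, t, hs, hst, ht⟩ := geometric_hahn_banach_compact_closed D.convex D.compact
        (convex_singleton x) isClosed_singleton (Set.disjoint_singleton_right.2 hxP)
      exact ⟨f.toLinearMap, fun v hv => (hs v (D.extreme v hv).1).trans (hst.trans (ht x rfl))⟩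
    set W : Finset (Fin n → ℝ) := D.edges ∪
      ((D.edges ×ˢ D.edges).image fun p => ξ p.1 • p.2 - ξ p.2 • p.1).filter (· ≠ 0) with hW
    have hW0 : ∀ w ∈ W, w ≠ 0 := by
      intro w hw
      rcases Finset.mem_union.1 hw with h | h
      · exact D.edges_ne_zero w h
      · exact (Finset.mem_filter.1 h).2
    obtain ⟨ζ, hζ⟩ := exists_functional_ne_zero W hW0
    have hev : ∀ᶠ ε in nhdsWithin (0 : ℝ) (Set.Ioi 0),
        (∀ w ∈ W, f w + ε * ζ w ≠ 0) ∧ ∀ v ∈ D.V, f v + ε * ζ v < f x + ε * ζ x := by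
      refine Filter.Eventually.and ?_ ?_
      · rw [Filter.eventually_all_finset]
        intro w hw
        by_cases hfw : f w = 0
        · filter_upwards [self_mem_nhdsWithin] with ε hε
          rw [hfw, zero_add]
          exact mul_ne_zero (ne_of_gt hε) (hζ w hw)
        · apply Filter.Eventually.filter_mono nhdsWithin_le_nhds
          have hc : ContinuousAt (fun ε : ℝ => f w + ε * ζ w) 0 := by fun_prop
          exact hc.eventually_ne (by simpa using hfw)
      · rw [Filter.eventually_all_finset]
        intro v hv
        apply Filter.Eventually.filter_mono nhdsWithin_le_nhds
        have hc : ContinuousAt (fun ε : ℝ => f v + ε * ζ v) 0 := by fun_prop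
        have hc' : ContinuousAt (fun ε : ℝ => f x + ε * ζ x) 0 := by fun_prop
        exact hc.eventually_lt hc' (by simpa using hf v hv)
    obtain ⟨ε, hε1, hε2⟩ := hev.exists
    set ξ₁ : (Fin n → ℝ) →ₗ[ℝ] ℝ := f + ε • ζ with hξ₁
    have hval : ∀ z, ξ₁ z = f z + ε * ζ z := fun z => by simp [hξ₁]
    have h₁ : D.Generic ξ₁ := by
      rw [D.generic_iff]
      intro e he
      rw [hval]
      exact hε1 e (Finset.mem_union_left _ he)
    rw [D.polar_path K x ξ₁ h₁ _ ξ hξ ?_ le_rfl]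
    · rw [polar]
      apply Finset.sum_eq_zero
      intro v hv
      obtain ⟨hv, hKv⟩ := Finset.mem_filter.1 hv
      by_contra hne
      rw [← ne_eq, Finset.prod_ne_zero_iff] at hne
      have hlt : ξ₁ v < ξ₁ x := by rw [hval, hval]; exact hε2 v hv
      have := hexp ξ₁ v hv hKv
      have hle : ∑ i ∈ D.J v \ K, (D.α i x + D.b i) / D.α i (D.u v i) * ξ₁ (D.u v i) ≤ 0 := by
        apply Finset.sum_nonpos
        intro i hi
        have h := hne i hi
        have hup := D.u_pos v hv i (Finset.mem_sdiff.1 hi).1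
        unfold flipInd at h
        split_ifs at h with c1 c2 c3
        · exact mul_nonpos_of_nonneg_of_nonpos (div_nonneg c2 hup.le) c1.le
        · exact absurd rfl h
        · exact mul_nonpos_of_nonpos_of_nonneg (div_nonpos_of_nonpos_of_nonneg c3.le hup.le)
            (not_lt.1 c1)
        · exact absurd rfl h
      linarith
    · intro e he e' he' heq
      by_cases h0 : ξ e • e' - ξ e' • e = 0
      · refine ⟨(ξ e)⁻¹ * ξ e', ?_⟩
        have hne := D.generic_iff.1 hξ e he
        rw [mul_smul, ← sub_eq_zero.1 h0, smul_smul, inv_mul_cancel₀ hne, one_smul]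
      · exfalso
        apply hε1 _ (Finset.mem_union_right _ (Finset.mem_filter.2
          ⟨Finset.mem_image.2 ⟨(e, e'), Finset.mem_product.2 ⟨he, he'⟩, rfl⟩, h0⟩))
        simp only
        rw [← hval, map_sub, map_smul, map_smul, smul_eq_mul, smul_eq_mul]
        linarith

end SimpleData

/-! ### Exponential sums over flipped lattice cones -/

lemma hasSum_of_eq {β : Type} {f g : β → ℂ} {a b : ℂ} (h : HasSum f a) (hf : ∀ x, g x = f x)
    (ha : b = a) : HasSum g b := by
  rw [funext hf, ha]; exact h

lemma hasSum_fin_prod (m : ℕ) (f : Fin m → ℤ → ℂ) (a : Fin m → ℂ)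
    (h : ∀ i, HasSum (f i) (a i)) :
    HasSum (fun N : Fin m → ℤ => ∏ i, f i (N i)) (∏ i, a i) := by
  induction m with
  | zero =>
    simp only [Finset.univ_eq_empty, Finset.prod_empty]
    exact hasSum_unique _
  | succ m ih =>
    have h2 := ih (fun i => f i.succ) (fun i => a i.succ) (fun i => h i.succ)
    have h1 := h 0
    have hs : Summable fun x : ℤ × (Fin m → ℤ) => f 0 x.1 * ∏ i : Fin m, f i.succ (x.2 i) :=
      summable_mul_of_summable_norm (f := f 0)
        (g := fun N : Fin m → ℤ => ∏ i : Fin m, f i.succ (N i)) h1.summable.norm h2.summable.norm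
    have h3 := h1.mul h2 hs
    rw [Fin.prod_univ_succ, ← (Fin.consEquiv fun _ => ℤ).hasSum_iff]
    refine hasSum_of_eq h3 (fun x => ?_) rfl
    simp [Function.comp, Fin.prod_univ_succ, Fin.consEquiv]

lemma hasSum_pi_prod {κ : Type} [Fintype κ] (f : κ → ℤ → ℂ) (a : κ → ℂ)
    (h : ∀ i, HasSum (f i) (a i)) : HasSum (fun N : κ → ℤ => ∏ i, f i (N i)) (∏ i, a i) := by
  have e := (Fintype.equivFin κ).symm
  have := hasSum_fin_prod _ (fun i => f (e i)) (fun i => a (e i)) (fun i => h (e i))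
  rw [← (Equiv.arrowCongr e (Equiv.refl ℤ)).hasSum_iff, ← Fintype.prod_equiv e _ _ (fun i => rfl)]
  refine hasSum_of_eq this (fun N => ?_) rfl
  simp only [Function.comp]
  rw [← Fintype.prod_equiv e (fun i => f (e i) (N i)) _ (fun i => by simp)]

/-- The weight of one coordinate `s` of a cone: `1 + y` times the (flipped) indicator of the ray,
corrected by `-y` at the apex. For `c < 0` this is `1` at the apex and `1 + y` beyond it. -/
def rayWeight (y : ℂ) (c s : ℝ) : ℂ := (1 + y) * flipInd c s - y * (if s = 0 then 1 else 0)

/-- Numerator, over the denominator `1 - exp c`, of the exponential sum over the points of `θ + ℤ`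
on a weighted ray, where `0 ≤ θ < 1`. -/
def rayNum (y : ℂ) (θ c : ℝ) : ℂ :=
  if θ = 0 then 1 + y * Complex.exp c else (1 + y) * Complex.exp (θ * c : ℝ)

lemma one_sub_exp_ne_zero {c : ℝ} (hc : c ≠ 0) : (1 : ℂ) - Complex.exp c ≠ 0 := by
  rw [sub_ne_zero, ← Complex.ofReal_exp]
  intro h
  apply hc
  have : Real.exp c = 1 := by exact_mod_cast h.symm
  simpa using this

/-- The flipped ray and the ray `s ≥ 0` have, up to convergence, the same exponential sum: the
value is the same expression for both signs of `c`. -/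
lemma hasSum_geom_int {c : ℝ} (hc : c ≠ 0) {θ : ℝ} (h0 : 0 ≤ θ) (h1 : θ < 1) :
    HasSum (fun N : ℤ => flipInd c (θ + N) * Complex.exp ((θ + N) * c : ℝ))
      (Complex.exp (θ * c : ℝ) / (1 - Complex.exp c)) := by
  rcases lt_or_gt_of_ne hc with hc | hc
  · have hg := hasSum_geometric_of_lt_one (Real.exp_pos c).le (Real.exp_lt_one_iff.2 hc)
    have hg' := (Complex.hasSum_ofReal.2 hg).mul_left (Complex.exp (θ * c : ℝ))
    have hinj : Function.Injective (fun k : ℕ => (k : ℤ)) := Nat.cast_injective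
    rw [← hinj.hasSum_iff]
    · refine hasSum_of_eq hg' (fun k => ?_) ?_
      · have : (0 : ℝ) ≤ θ + ((k : ℤ) : ℝ) := by push_cast; positivity
        simp only [Function.comp, flipInd, if_pos hc, if_pos this, one_mul]
        push_cast
        rw [← Complex.exp_nat_mul, ← Complex.exp_add]
        ring_nf
      · push_cast
        rw [div_eq_mul_inv]
    · intro N hN
      have : N < 0 := by
        by_contra h
        push Not at h
        exact hN ⟨N.toNat, by simp [h]⟩
      have h2 : (N : ℝ) ≤ -1 := by exact_mod_cast Int.le_sub_one_of_lt this
      rw [flipInd, if_pos hc, if_neg (by linarith), zero_mul]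
  · have hg := hasSum_geometric_of_lt_one (Real.exp_pos (-c)).le (Real.exp_lt_one_iff.2 (by linarith))
    have hg' := (Complex.hasSum_ofReal.2 hg).mul_left (-Complex.exp ((θ - 1) * c : ℝ))
    have hinj : Function.Injective (fun k : ℕ => (-1 - k : ℤ)) := fun a b h => by
      simpa using h
    rw [← hinj.hasSum_iff]
    · refine hasSum_of_eq hg' (fun k => ?_) ?_
      · have : θ + ((-1 - k : ℤ) : ℝ) < 0 := by
          push_cast
          have : (0 : ℝ) ≤ k := Nat.cast_nonneg k
          linarith
        simp only [Function.comp, flipInd, if_neg (not_lt.2 hc.le), if_pos this]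
        push_cast
        rw [← Complex.exp_nat_mul, neg_mul, neg_mul, ← Complex.exp_add, one_mul]
        ring_nf
      · push_cast
        rw [show ((θ : ℂ) - 1) * c = θ * c + -c by ring, Complex.exp_add, Complex.exp_neg]
        have hne := one_sub_exp_ne_zero hc.ne'
        have hne0 := Complex.exp_ne_zero c
        have hne2 : (1 : ℂ) - (Complex.exp c)⁻¹ ≠ 0 := by
          intro h
          apply hne
          field_simp at h
          linear_combination -h
        have hne3 : Complex.exp c - 1 ≠ 0 := by
          intro h
          apply hne
          linear_combination -h
        field_simp
        ring
    · intro N hN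
      have : 0 ≤ N := by
        by_contra h
        push Not at h
        exact hN ⟨(-1 - N).toNat, by
          have : ((-1 - N).toNat : ℤ) = -1 - N := Int.toNat_of_nonneg (by linarith)
          simp only [this]; ring⟩
      have h2 : (0 : ℝ) ≤ N := by exact_mod_cast this
      rw [flipInd, if_neg (not_lt.2 hc.le), if_neg (by linarith), zero_mul]

lemma hasSum_ray (y : ℂ) {c : ℝ} (hc : c ≠ 0) {θ : ℝ} (h0 : 0 ≤ θ) (h1 : θ < 1) :
    HasSum (fun N : ℤ => rayWeight y c (θ + N) * Complex.exp ((θ + N) * c : ℝ))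
      (rayNum y θ c / (1 - Complex.exp c)) := by
  have hg := (hasSum_geom_int hc h0 h1).mul_left (1 + y)
  have hne := one_sub_exp_ne_zero hc
  by_cases hθ : θ = 0
  · subst hθ
    have hp := hasSum_ite_eq (0 : ℤ) (y : ℂ)
    refine hasSum_of_eq (hg.sub hp) (fun N => ?_) ?_
    · by_cases hN : N = 0
      · subst hN; simp [rayWeight]
      · have : (N : ℝ) ≠ 0 := by exact_mod_cast hN
        simp [rayWeight, hN, mul_assoc]
    · simp [rayNum]; field_simp; ring
  · refine hasSum_of_eq hg (fun N => ?_) ?_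
    · have : θ + (N : ℝ) ≠ 0 := by
        intro h
        have h2 : (N : ℝ) = -θ := by linarith
        have h3 : (N : ℝ) < 0 := by rw [h2]; have := lt_of_le_of_ne h0 (Ne.symm hθ); linarith
        have h4 : (-1 : ℝ) < N := by rw [h2]; linarith
        have h3' : N < 0 := by exact_mod_cast h3
        have h4' : -1 < N := by exact_mod_cast h4
        omega
      simp only [rayWeight, if_neg this]; ring
    · rw [rayNum, if_neg hθ]; ring

lemma intVec_add {n : ℕ} (a b : Fin n → ℤ) : intVec (a + b) = intVec a + intVec b := by
  ext i; simp [intVec]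

lemma intVec_neg {n : ℕ} (a : Fin n → ℤ) : intVec (-a) = -intVec a := by
  ext i; simp [intVec]

lemma intVec_zsmul {n : ℕ} (N : ℤ) (a : Fin n → ℤ) : intVec (N • a) = (N : ℝ) • intVec a := by
  ext i; simp [intVec]

lemma intVec_sum {n : ℕ} {κ : Type} (s : Finset κ) (f : κ → Fin n → ℤ) :
    intVec (∑ i ∈ s, f i) = ∑ i ∈ s, intVec (f i) := by
  ext j; simp [intVec]

lemma intVec_injective {n : ℕ} : Function.Injective (intVec (n := n)) := by
  intro a b h
  ext i
  have := congrFun h i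
  simpa [intVec] using this

/-- A basis `t` of `ℝ^n` consisting of integral vectors, with its coordinate functions `s`. -/
structure LatticeBasis (n : ℕ) (κ : Type) [Fintype κ] where
  t : κ → Fin n → ℤ
  s : κ → (Fin n → ℝ) →ₗ[ℝ] ℝ
  s_t : ∀ i j, s i (intVec (t j)) = if i = j then 1 else 0
  expand : ∀ z, z = ∑ i, s i z • intVec (t i)

namespace LatticeBasis

variable {n : ℕ} {κ : Type} [Fintype κ] (L : LatticeBasis n κ)

/-- The lattice points of the half-open fundamental parallelepiped. -/
def boxSet : Set (Fin n → ℤ) := {k | ∀ i, 0 ≤ L.s i (intVec k) ∧ L.s i (intVec k) < 1}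

lemma boxSet_finite : L.boxSet.Finite := by
  apply (Set.finite_Icc (fun j => -∑ i, |L.t i j|) (fun j => ∑ i, |L.t i j|)).subset
  intro k hk
  have key : ∀ j, |k j| ≤ ∑ i, |L.t i j| := by
    intro j
    have h := congrFun (L.expand (intVec k)) j
    have h2 : |(k j : ℝ)| ≤ ∑ i, |(L.t i j : ℝ)| := by
      change (k j : ℝ) = _ at h
      rw [h, Finset.sum_apply]
      refine (Finset.abs_sum_le_sum_abs _ _).trans (Finset.sum_le_sum fun i _ => ?_)
      rw [Pi.smul_apply, smul_eq_mul, abs_mul]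
      have : |L.s i (intVec k)| ≤ 1 := by
        rw [abs_of_nonneg (hk i).1]; exact (hk i).2.le
      exact mul_le_of_le_one_left (abs_nonneg _) this
    exact_mod_cast h2
  exact ⟨fun j => (abs_le.1 (key j)).1, fun j => (abs_le.1 (key j)).2⟩

/-- The lattice points of the half-open fundamental parallelepiped, as a finite set. -/
def box : Finset (Fin n → ℤ) := L.boxSet_finite.toFinset

lemma mem_box {k : Fin n → ℤ} :
    k ∈ L.box ↔ ∀ i, 0 ≤ L.s i (intVec k) ∧ L.s i (intVec k) < 1 := by
  simp [box, boxSet]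

lemma s_add (k : Fin n → ℤ) (N : κ → ℤ) (i : κ) :
    L.s i (intVec (k + ∑ j, N j • L.t j)) = L.s i (intVec k) + N i := by
  rw [intVec_add, intVec_sum, map_add, map_sum]
  simp only [intVec_zsmul, map_smul, L.s_t, smul_eq_mul]
  simp

/-- The representative of `k` in the fundamental parallelepiped. -/
def red (k : Fin n → ℤ) : Fin n → ℤ := k + ∑ i, (-⌊L.s i (intVec k)⌋) • L.t i

lemma s_red (k : Fin n → ℤ) (i : κ) : L.s i (intVec (L.red k)) = Int.fract (L.s i (intVec k)) := by
  rw [red, L.s_add]; push_cast; rw [Int.fract]; ring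

lemma red_mem (k : Fin n → ℤ) : L.red k ∈ L.box := by
  rw [mem_box]
  intro i
  rw [s_red]
  exact ⟨Int.fract_nonneg _, Int.fract_lt_one _⟩

lemma ext_s {k l : Fin n → ℤ} (h : ∀ i, L.s i (intVec k) = L.s i (intVec l)) : k = l := by
  apply intVec_injective
  rw [L.expand (intVec k), L.expand (intVec l)]
  simp only [h]

/-- The exponential sum over the lattice points of the flipped weighted cone. -/
theorem hasSum_cone (y : ℂ) (ξ : (Fin n → ℝ) →ₗ[ℝ] ℝ) (hξ : ∀ i, ξ (intVec (L.t i)) ≠ 0) :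
    HasSum (fun k : Fin n → ℤ => (∏ i, rayWeight y (ξ (intVec (L.t i))) (L.s i (intVec k))) *
        Complex.exp (ξ (intVec k) : ℝ))
      (∑ r ∈ L.box, ∏ i, rayNum y (L.s i (intVec r)) (ξ (intVec (L.t i))) /
        (1 - Complex.exp (ξ (intVec (L.t i)) : ℝ))) := by
  set F : (Fin n → ℤ) → ℂ := fun k =>
    (∏ i, rayWeight y (ξ (intVec (L.t i))) (L.s i (intVec k))) * Complex.exp (ξ (intVec k) : ℝ)
    with hF
  have hF' : ∀ k, F k = ∏ i, (rayWeight y (ξ (intVec (L.t i))) (L.s i (intVec k)) *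
      Complex.exp (L.s i (intVec k) * ξ (intVec (L.t i)) : ℝ)) := by
    intro k
    have : ξ (intVec k) = ∑ i, L.s i (intVec k) * ξ (intVec (L.t i)) := by
      conv_lhs => rw [L.expand (intVec k)]
      simp only [map_sum, map_smul, smul_eq_mul]
    simp only [hF]
    rw [Finset.prod_mul_distrib, this, Complex.ofReal_sum, Complex.exp_sum]
  have hsplit : F = fun k => ∑ r ∈ L.box, if L.red k = r then F k else 0 := by
    ext k
    rw [Finset.sum_ite_eq, if_pos (L.red_mem k)]
  rw [hsplit]
  apply hasSum_sum
  intro r hr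
  rw [mem_box] at hr
  have hinj : Function.Injective (fun N : κ → ℤ => r + ∑ i, N i • L.t i) := by
    intro N M h
    ext i
    have := congrArg (fun k => L.s i (intVec k)) h
    simp only [L.s_add] at this
    have h2 : (N i : ℝ) = M i := by linarith
    exact_mod_cast h2
  rw [← hinj.hasSum_iff]
  · refine hasSum_of_eq (hasSum_pi_prod _ _ (fun i => hasSum_ray y (hξ i) (hr i).1 (hr i).2))
      (fun N => ?_) rfl
    have hred : L.red (r + ∑ i, N i • L.t i) = r := by
      apply L.ext_s
      intro i
      rw [s_red, s_add, Int.fract_add_intCast, Int.fract_eq_self.2 (hr i)]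
    simp only [Function.comp]
    rw [if_pos hred, hF']
    simp only [L.s_add]
  · intro k hk
    rw [if_neg]
    intro h
    apply hk
    refine ⟨fun i => ⌊L.s i (intVec k)⌋, ?_⟩
    simp only
    rw [← h, red]
    simp [add_assoc]

end LatticeBasis

/-! ### The weighted Brion formula for exponential sums -/

lemma finite_intVec_mem {n : ℕ} {B : Set (Fin n → ℝ)} (hB : Bornology.IsBounded B) :
    {m : Fin n → ℤ | intVec m ∈ B}.Finite := by
  obtain ⟨R, hR⟩ := hB.exists_norm_le
  apply (Set.finite_Icc (fun _ : Fin n => -⌈R⌉) (fun _ => ⌈R⌉)).subset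
  intro m hm
  have key : ∀ j, |m j| ≤ ⌈R⌉ := by
    intro j
    have h1 := (norm_le_pi_norm (intVec m) j).trans (hR _ hm)
    have h2 : |(m j : ℝ)| ≤ (⌈R⌉ : ℝ) := by
      have : ‖intVec m j‖ = |(m j : ℝ)| := rfl
      rw [← this]
      exact h1.trans (Int.le_ceil R)
    exact_mod_cast h2
  exact ⟨fun j => (abs_le.1 (key j)).1, fun j => (abs_le.1 (key j)).2⟩

/-- The coefficient `(1 + y)^{dim F} (-y)^{codim F}` of a face `F` of codimension `k`. -/
def faceWeight (n : ℕ) (y : ℂ) (k : ℕ) : ℂ := (1 + y) ^ (n - k) * (-y) ^ k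

namespace SimpleData

variable {n : ℕ} {ι : Type} (D : SimpleData n ι)

/-- The face cut out by the facets in `K`. -/
def face (K : Finset ι) : Set (Fin n → ℝ) := {x | x ∈ D.P ∧ ∀ i ∈ K, D.α i x + D.b i = 0}

/-- The sets of facets with a common vertex; these label the faces. -/
def faceSets : Finset (Finset ι) := D.V.biUnion fun v => (D.J v).powerset

lemma mem_faceSets {K : Finset ι} : K ∈ D.faceSets ↔ ∃ v ∈ D.V, K ⊆ D.J v := by
  simp [faceSets]

lemma pts_finite (q : ℕ) (K : Finset ι) :
    {m : Fin n → ℤ | intVec m ∈ (q : ℝ) • D.face K}.Finite :=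
  finite_intVec_mem ((D.compact.isBounded.subset fun _ hx => hx.1).smul₀ _)

/-- The lattice points of the `q`-th dilate of the face labelled by `K`. -/
def pts (q : ℕ) (K : Finset ι) : Finset (Fin n → ℤ) := (D.pts_finite q K).toFinset

lemma mem_pts {q : ℕ} (hq : 0 < q) {K : Finset ι} {m : Fin n → ℤ} :
    m ∈ D.pts q K ↔ (q : ℝ)⁻¹ • intVec m ∈ D.face K := by
  have hq' : (q : ℝ) ≠ 0 := by exact_mod_cast hq.ne'
  simp only [pts, Set.Finite.mem_toFinset, Set.mem_ofPred_eq]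
  rw [Set.mem_smul_set_iff_inv_smul_mem₀ hq']

/-- An integral representative of the vertex `v`. -/
def vert (v : D.V) : Fin n → ℤ := (D.V_int v v.2).choose

lemma vert_spec (v : D.V) : intVec (D.vert v) = v := (D.V_int v v.2).choose_spec.symm

/-- The edge vectors at `v`, as a basis of `ℝ^n` consisting of integral vectors. -/
def basis (v : D.V) : LatticeBasis n (D.J v) where
  t i := (D.u_int v v.2 i i.2).choose
  s i := (D.α i (D.u v i))⁻¹ • D.α i
  s_t i j := by
    rw [← (D.u_int v v.2 j j.2).choose_spec, LinearMap.smul_apply, smul_eq_mul]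
    split_ifs with h
    · subst h; exact inv_mul_cancel₀ (D.u_pos v v.2 i i.2).ne'
    · rw [D.u_zero v v.2 j j.2 i i.2 (fun h' => h (Subtype.ext h')), mul_zero]
  expand z := by
    conv_lhs => rw [D.expand v.2 z, ← Finset.sum_coe_sort]
    refine Finset.sum_congr rfl fun i _ => ?_
    rw [← (D.u_int v v.2 i i.2).choose_spec, LinearMap.smul_apply, smul_eq_mul, div_eq_inv_mul]

lemma basis_t (v : D.V) (i : D.J v) : intVec ((D.basis v).t i) = D.u v i :=
  (D.u_int v v.2 i i.2).choose_spec.symm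

lemma basis_s (v : D.V) (i : D.J v) (z : Fin n → ℝ) :
    (D.basis v).s i z = D.α i z / D.α i (D.u v i) := by
  simp [basis, div_eq_inv_mul]

lemma flipInd_mul {c s t : ℝ} (ht : 0 < t) : flipInd c (s * t) = flipInd c s := by
  unfold flipInd
  simp only [mul_nonneg_iff_of_pos_right ht, mul_neg_iff, ht, not_lt.2 ht.le, and_true, and_false,
    false_or]

/-- The weighted sum of the indicators of all faces is the sum over the vertices of the weighted
flipped cones. -/
lemma pointwise (y : ℂ) {q : ℕ} (hq : 0 < q) {ξ : (Fin n → ℝ) →ₗ[ℝ] ℝ} (hξ : D.Generic ξ)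
    (m : Fin n → ℤ) :
    ∑ K ∈ D.faceSets, faceWeight n y K.card * (if m ∈ D.pts q K then 1 else 0) =
      ∑ v : D.V, ∏ i : D.J v, rayWeight y (ξ (intVec ((D.basis v).t i)))
        ((D.basis v).s i (intVec (m - (q : ℤ) • D.vert v))) := by
  have hq' : (0 : ℝ) < q := by exact_mod_cast hq
  set x : Fin n → ℝ := (q : ℝ)⁻¹ • intVec m with hx
  set z : ι → ℂ := fun i => if D.α i x + D.b i = 0 then 1 else 0 with hz
  -- on the face, the factors `z i` cut out its affine hull and `polar_eq` does the rest
  have h1 : ∀ K ∈ D.faceSets, (if m ∈ D.pts q K then (1 : ℂ) else 0) =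
      ∑ v ∈ D.V with K ⊆ D.J v, (∏ i ∈ K, z i) *
        ∏ i ∈ D.J v \ K, flipInd (ξ (D.u v i)) (D.α i x + D.b i) := by
    intro K hK
    obtain ⟨v₀, hv₀, hKv⟩ := D.mem_faceSets.1 hK
    rw [← Finset.mul_sum]
    change _ = _ * D.polar ξ K x
    by_cases hKx : ∀ i ∈ K, D.α i x + D.b i = 0
    · rw [D.polar_eq hξ hv₀ hKv hKx, Finset.prod_eq_one (fun i hi => by rw [hz]; exact if_pos (hKx i hi)),
        one_mul]
      congr 1
      rw [D.mem_pts hq]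
      exact propext ⟨fun h => h.1, fun h => ⟨h, hKx⟩⟩
    · rw [if_neg (fun h => hKx ((D.mem_pts hq).1 h).2)]
      push Not at hKx
      obtain ⟨i, hi, hix⟩ := hKx
      rw [Finset.prod_eq_zero hi (by rw [hz]; exact if_neg hix), zero_mul]
  rw [Finset.sum_congr rfl fun K hK => by rw [h1 K hK, Finset.mul_sum, Finset.sum_filter]]
  rw [Finset.sum_comm, ← Finset.sum_coe_sort]
  refine Finset.sum_congr rfl fun v _ => ?_
  rw [← Finset.sum_filter]
  have h2 : D.faceSets.filter (fun K => K ⊆ D.J v) = (D.J v).powerset := by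
    ext K
    rw [Finset.mem_filter, Finset.mem_powerset, mem_faceSets]
    exact ⟨fun h => h.2, fun h => ⟨⟨v, v.2, h⟩, h⟩⟩
  rw [h2, Finset.prod_coe_sort_eq_attach]
  have h3 : ∀ i ∈ D.J v, (-y) * z i + (1 + y) * flipInd (ξ (D.u v i)) (D.α i x + D.b i) =
      rayWeight y (ξ (D.u v i))
        (D.α i (intVec (m - (q : ℤ) • D.vert v)) / D.α i (D.u v i)) := by
    intro i hi
    have hpos := D.u_pos v v.2 i hi
    have hv0 := (D.mem_J v v.2 i).1 hi
    have e1 : D.α i (intVec (m - (q : ℤ) • D.vert v)) / D.α i (D.u v i) =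
        (D.α i x + D.b i) * (q / D.α i (D.u v i)) := by
      rw [sub_eq_add_neg, intVec_add, intVec_neg, intVec_zsmul, D.vert_spec, map_add, map_neg,
        map_smul, hx, map_smul, smul_eq_mul, smul_eq_mul]
      have : D.α i v = - D.b i := by linarith
      rw [this]
      push_cast
      field_simp
    have hpos2 : 0 < (q : ℝ) / D.α i (D.u v i) := by positivity
    rw [e1, rayWeight, flipInd_mul hpos2]
    simp only [hz, mul_eq_zero, hpos2.ne', or_false]
    ring
  have h4 : (∏ i ∈ (D.J v).attach, rayWeight y (ξ (intVec ((D.basis v).t i)))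
        ((D.basis v).s i (intVec (m - (q : ℤ) • D.vert v)))) = ∏ i ∈ D.J v,
      ((-y) * z i + (1 + y) * flipInd (ξ (D.u v i)) (D.α i x + D.b i)) := by
    rw [← Finset.prod_attach (D.J v)]
    refine Finset.prod_congr rfl fun i _ => ?_
    rw [h3 i i.2, basis_t, basis_s]
  rw [h4, Finset.prod_add]
  refine Finset.sum_congr rfl fun K hK => ?_
  rw [Finset.mem_powerset] at hK
  rw [Finset.prod_mul_distrib, Finset.prod_mul_distrib, Finset.prod_const, Finset.prod_const,
    Finset.card_sdiff_of_subset hK, D.card_J v v.2, faceWeight]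
  ring

/-- The weighted exponential sum over all faces is a sum of local contributions of the vertices. -/
theorem exp_sum (y : ℂ) {q : ℕ} (hq : 0 < q) {ξ : (Fin n → ℝ) →ₗ[ℝ] ℝ} (hξ : D.Generic ξ) :
    ∑ K ∈ D.faceSets, faceWeight n y K.card * ∑ m ∈ D.pts q K, Complex.exp (ξ (intVec m) : ℝ) =
      ∑ v : D.V, Complex.exp (q * ξ v : ℝ) * ∑ r ∈ (D.basis v).box, ∏ i : D.J v,
        rayNum y ((D.basis v).s i (intVec r)) (ξ (D.u v i)) /
          (1 - Complex.exp (ξ (D.u v i) : ℝ)) := by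
  have hL : HasSum (fun m : Fin n → ℤ => ∑ K ∈ D.faceSets,
      faceWeight n y K.card * ((if m ∈ D.pts q K then 1 else 0) * Complex.exp (ξ (intVec m) : ℝ)))
      (∑ K ∈ D.faceSets, faceWeight n y K.card * ∑ m ∈ D.pts q K, Complex.exp (ξ (intVec m) : ℝ)) := by
    apply hasSum_sum
    intro K _
    apply HasSum.mul_left
    have := hasSum_sum_of_ne_finset_zero (L := .unconditional _) (s := D.pts q K) (f := fun m : Fin n → ℤ =>
      (if m ∈ D.pts q K then 1 else 0) * Complex.exp (ξ (intVec m) : ℝ))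
      (fun m hm => by rw [if_neg hm, zero_mul])
    refine hasSum_of_eq this (fun _ => rfl) (Finset.sum_congr rfl fun m hm => ?_)
    rw [if_pos hm, one_mul]
  have hR : HasSum (fun m : Fin n → ℤ => ∑ v : D.V,
      (∏ i : D.J v, rayWeight y (ξ (intVec ((D.basis v).t i)))
        ((D.basis v).s i (intVec (m - (q : ℤ) • D.vert v)))) * Complex.exp (ξ (intVec m) : ℝ))
      (∑ v : D.V, Complex.exp (q * ξ v : ℝ) * ∑ r ∈ (D.basis v).box, ∏ i : D.J v,
        rayNum y ((D.basis v).s i (intVec r)) (ξ (D.u v i)) /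
          (1 - Complex.exp (ξ (D.u v i) : ℝ))) := by
    apply hasSum_sum
    intro v _
    have hc := ((D.basis v).hasSum_cone y ξ
      (fun i => by rw [basis_t]; exact hξ v v.2 i i.2)).mul_left (Complex.exp (q * ξ v : ℝ))
    rw [← (Equiv.addRight ((q : ℤ) • D.vert v)).hasSum_iff]
    refine hasSum_of_eq hc (fun k => ?_) ?_
    · simp only [Function.comp, Equiv.coe_addRight, add_sub_cancel_right]
      rw [intVec_add, map_add, intVec_zsmul, vert_spec, map_smul, smul_eq_mul]
      push_cast
      rw [Complex.exp_add]
      ring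
    · simp only [basis_t]
  refine hL.unique (hasSum_of_eq hR (fun m => ?_) rfl)
  rw [← Finset.sum_mul, ← D.pointwise y hq hξ m, Finset.sum_mul]
  refine Finset.sum_congr rfl fun K _ => ?_
  ring

end SimpleData

/-! ### Passage to formal exponentials -/

/-- The formal exponential with exponent `x`, in the group algebra of `(ℝ, +)`. -/
def fexp (x : ℝ) : MonoidAlgebra ℂ (Multiplicative ℝ) :=
  MonoidAlgebra.of ℂ (Multiplicative ℝ) (Multiplicative.ofAdd x)

/-- The character `x ↦ exp (j x)` of `(ℝ, +)`. -/
def expChar (j : ℕ) : Multiplicative ℝ →* ℂ where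
  toFun x := Complex.exp (j * x.toAdd : ℝ)
  map_one' := by simp
  map_mul' x y := by
    rw [← Complex.exp_add]; push_cast [toAdd_mul]; ring_nf

/-- An exponential polynomial vanishing at all positive integers is zero, by linear independence of
characters. -/
lemma eq_zero_of_expChar (a : MonoidAlgebra ℂ (Multiplicative ℝ))
    (h : ∀ j : ℕ, 0 < j → MonoidAlgebra.lift ℂ ℂ (Multiplicative ℝ) (expChar j) a = 0) : a = 0 := by
  have hli := (linearIndependent_monoidHom (Multiplicative ℕ) ℂ).comp
    (fun x : Multiplicative ℝ => powersHom ℂ (Complex.exp (x.toAdd : ℝ))) (by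
      intro x y hxy
      have h1 := DFunLike.congr_fun hxy (Multiplicative.ofAdd 1)
      simp only [powersHom_apply, toAdd_ofAdd, pow_one, ← Complex.ofReal_exp] at h1
      have h2 := Real.exp_injective (Complex.ofReal_injective h1)
      exact Multiplicative.toAdd.injective h2)
  rw [linearIndependent_iff'] at hli
  have h0 : ∀ x ∈ a.coeff.support, a.coeff x * Complex.exp (x.toAdd : ℝ) = 0 := by
    apply hli a.coeff.support
    ext j
    have := h (j.toAdd + 1) (Nat.succ_pos _)
    rw [MonoidAlgebra.lift_apply, Finsupp.sum] at this
    rw [Finset.sum_apply, Pi.zero_apply, ← this]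
    refine Finset.sum_congr rfl fun x _ => ?_
    simp only [Function.comp, Pi.smul_apply, powersHom_apply, smul_eq_mul, expChar,
      MonoidHom.coe_mk, OneHom.coe_mk]
    rw [← Complex.exp_nat_mul, mul_assoc, ← Complex.exp_add]
    push_cast
    ring_nf
  ext x
  by_contra hx
  have := h0 x (Finsupp.mem_support_iff.2 hx)
  exact hx ((mul_eq_zero.1 this).resolve_right (Complex.exp_ne_zero _))

/-- The numerator `rayNum` with the exponential replaced by an arbitrary function `e`. -/
def gNum {R : Type} [CommRing R] [Algebra ℂ R] (e : ℝ → R) (y : ℂ) (θ c : ℝ) : R :=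
  if θ = 0 then 1 + algebraMap ℂ R y * e c else algebraMap ℂ R (1 + y) * e (θ * c)

namespace SimpleData

variable {n : ℕ} {ι : Type} (D : SimpleData n ι)

section
variable {R : Type} [CommRing R] [Algebra ℂ R] (ξ : (Fin n → ℝ) →ₗ[ℝ] ℝ) (e : ℝ → R)

/-- The denominator of the contribution of the vertex `v`, for the exponential `e`. -/
def gDen (v : D.V) : R := ∏ i : D.J v, (1 - e (ξ (D.u v i)))

/-- The numerator of the contribution of the vertex `v`, for the exponential `e`. -/
def gVert (y : ℂ) (v : D.V) : R :=
  ∑ r ∈ (D.basis v).box, ∏ i : D.J v, gNum e y ((D.basis v).s i (intVec r)) (ξ (D.u v i))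

/-- The weighted exponential sum over all faces, for the exponential `e`. -/
def gSum (y : ℂ) (q : ℕ) : R :=
  ∑ K ∈ D.faceSets, algebraMap ℂ R (faceWeight n y K.card) * ∑ m ∈ D.pts q K, e (ξ (intVec m))

/-- The difference of the two sides of the weighted Brion formula, denominators cleared. -/
def gDiff (y : ℂ) (q : ℕ) : R :=
  (∏ v : D.V, D.gDen ξ e v) * D.gSum ξ e y q -
    ∑ v : D.V, e (q * ξ v) * D.gVert ξ e y v * ∏ w ∈ Finset.univ.erase v, D.gDen ξ e w

lemma map_gDiff {R' : Type} [CommRing R'] [Algebra ℂ R'] (Φ : R →ₐ[ℂ] R') (y : ℂ) (q : ℕ) :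
    Φ (D.gDiff ξ e y q) = D.gDiff ξ (fun x => Φ (e x)) y q := by
  simp only [gDiff, gDen, gSum, gVert, gNum, map_sub, map_mul, map_sum, map_prod, map_one,
    apply_ite Φ, map_add, AlgHom.commutes]

end

/-- The weighted Brion formula for the functional `j • ξ`. -/
lemma gDiff_expChar (y : ℂ) {q : ℕ} (hq : 0 < q) {ξ : (Fin n → ℝ) →ₗ[ℝ] ℝ} (hξ : D.Generic ξ)
    {j : ℕ} (hj : 0 < j) : D.gDiff ξ (fun x => expChar j (Multiplicative.ofAdd x)) y q = 0 := by
  have hj' : (j : ℝ) ≠ 0 := by exact_mod_cast hj.ne'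
  have hgen : D.Generic ((j : ℝ) • ξ) := by
    intro v hv i hi
    rw [LinearMap.smul_apply, smul_eq_mul]
    exact mul_ne_zero hj' (hξ v hv i hi)
  have hE := D.exp_sum y hq hgen
  simp only [LinearMap.smul_apply, smul_eq_mul] at hE
  have he : ∀ x, expChar j (Multiplicative.ofAdd x) = Complex.exp (j * x : ℝ) := fun x => rfl
  have hne : ∀ v : D.V, D.gDen ξ (fun x => expChar j (Multiplicative.ofAdd x)) v ≠ 0 := by
    intro v
    rw [gDen, Finset.prod_ne_zero_iff]
    intro i _
    rw [he]
    exact one_sub_exp_ne_zero (mul_ne_zero hj' (hξ v v.2 i i.2))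
  rw [gDiff, sub_eq_zero]
  have hS : D.gSum ξ (fun x => expChar j (Multiplicative.ofAdd x)) y q =
      ∑ v : D.V, Complex.exp (j * (q * ξ v) : ℝ) *
        (D.gVert ξ (fun x => expChar j (Multiplicative.ofAdd x)) y v /
          D.gDen ξ (fun x => expChar j (Multiplicative.ofAdd x)) v) := by
    refine hE.trans (Finset.sum_congr rfl fun v _ => ?_)
    congr 1
    · ring_nf
    · rw [gVert, Finset.sum_div]
      refine Finset.sum_congr rfl fun r _ => ?_
      rw [gDen, ← Finset.prod_div_distrib]
      refine Finset.prod_congr rfl fun i _ => ?_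
      simp only [he, rayNum, gNum, Algebra.algebraMap_self, RingHom.id_apply]
      congr 4
      ring_nf
  rw [hS, Finset.mul_sum]
  refine Finset.sum_congr rfl fun v _ => ?_
  rw [← Finset.mul_prod_erase Finset.univ _ (Finset.mem_univ v), he]
  have := hne v
  field_simp

/-- The weighted Brion formula holds for every homomorphism from `(ℝ, +)` to the multiplicative
monoid of a `ℂ`-algebra. -/
theorem gDiff_eq_zero {R : Type} [CommRing R] [Algebra ℂ R] (f : Multiplicative ℝ →* R) (y : ℂ)
    {q : ℕ} (hq : 0 < q) {ξ : (Fin n → ℝ) →ₗ[ℝ] ℝ} (hξ : D.Generic ξ) :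
    D.gDiff ξ (fun x => f (Multiplicative.ofAdd x)) y q = 0 := by
  have h0 : D.gDiff ξ fexp y q = 0 := by
    apply eq_zero_of_expChar
    intro j hj
    rw [map_gDiff]
    simp only [fexp, MonoidAlgebra.lift_of]
    exact D.gDiff_expChar y hq hξ hj
  have := D.map_gDiff ξ fexp (MonoidAlgebra.lift ℂ R (Multiplicative ℝ) f) y q
  simp only [fexp, MonoidAlgebra.lift_of] at this
  rw [← this]
  rw [h0, map_zero]

end SimpleData

/-! ### Power series and the symmetry of the vertex contributions -/

/-- The power series `exp (x X)`. -/
def pexp (x : ℝ) : PowerSeries ℂ := PowerSeries.rescale (x : ℂ) (PowerSeries.exp ℂ)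

lemma pexp_add (x y : ℝ) : pexp (x + y) = pexp x * pexp y := by
  rw [pexp, pexp, pexp, PowerSeries.exp_mul_exp_eq_exp_add]; push_cast; rfl

lemma pexp_zero : pexp 0 = 1 := by
  simp [pexp, PowerSeries.rescale_zero]

lemma coeff_pexp (x : ℝ) (k : ℕ) : PowerSeries.coeff k (pexp x) = (x : ℂ) ^ k / k.factorial := by
  rw [pexp, PowerSeries.coeff_rescale, PowerSeries.coeff_exp]
  simp [div_eq_mul_inv]

lemma evalNeg_pexp (x : ℝ) : PowerSeries.evalNegHom (pexp x) = pexp (-x) := by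
  rw [pexp, pexp, PowerSeries.evalNegHom, PowerSeries.rescale_rescale]
  push_cast
  congr 2
  ring

/-- `pexp` as a monoid homomorphism. -/
def pexpHom : Multiplicative ℝ →* PowerSeries ℂ where
  toFun x := pexp x.toAdd
  map_one' := pexp_zero
  map_mul' _ _ := pexp_add _ _

lemma exists_unit_part (c : ℝ) : ∃ U : PowerSeries ℂ, 1 - pexp c = PowerSeries.X * U := by
  have : PowerSeries.X ∣ 1 - pexp c := by
    rw [PowerSeries.X_dvd_iff]
    have := coeff_pexp c 0
    rw [PowerSeries.coeff_zero_eq_constantCoeff_apply] at this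
    simp [this]
  exact this

/-- The unit `U` with `1 - exp (c X) = X U` (for `c ≠ 0`). -/
def upart (c : ℝ) : PowerSeries ℂ := (exists_unit_part c).choose

lemma upart_spec (c : ℝ) : 1 - pexp c = PowerSeries.X * upart c := (exists_unit_part c).choose_spec

lemma upart_const {c : ℝ} (hc : c ≠ 0) : PowerSeries.constantCoeff (upart c) ≠ 0 := by
  have h := congrArg (PowerSeries.coeff 1) (upart_spec c)
  rw [show (1 : ℕ) = 0 + 1 from rfl, PowerSeries.coeff_succ_X_mul, map_sub, coeff_pexp,
    PowerSeries.coeff_zero_eq_constantCoeff_apply] at h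
  rw [← h]
  simp [PowerSeries.coeff_one, hc]

lemma upart_mul_inv {c : ℝ} (hc : c ≠ 0) : upart c * (upart c)⁻¹ = 1 :=
  PowerSeries.mul_inv_cancel _ (upart_const hc)

lemma evalNeg_upart (c : ℝ) : PowerSeries.evalNegHom (upart c) * pexp c = upart c := by
  have h := congrArg PowerSeries.evalNegHom (upart_spec c)
  rw [map_sub, map_one, evalNeg_pexp, map_mul, PowerSeries.evalNegHom_X] at h
  have h2 : pexp (-c) * pexp c = 1 := by rw [← pexp_add, neg_add_cancel, pexp_zero]
  have h3 := upart_spec c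
  apply mul_left_cancel₀ (PowerSeries.X_ne_zero (R := ℂ))
  linear_combination pexp c * h + h3 + h2

lemma evalNeg_upart_inv {c : ℝ} (hc : c ≠ 0) :
    PowerSeries.evalNegHom (upart c)⁻¹ = pexp c * (upart c)⁻¹ := by
  have h1 := upart_mul_inv hc
  have h2 := congrArg PowerSeries.evalNegHom h1
  rw [map_mul, map_one] at h2
  have h3 := evalNeg_upart c
  calc PowerSeries.evalNegHom (upart c)⁻¹
      = PowerSeries.evalNegHom (upart c)⁻¹ * (upart c * (upart c)⁻¹) := by rw [h1, mul_one]
    _ = PowerSeries.evalNegHom (upart c)⁻¹ *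
          (PowerSeries.evalNegHom (upart c) * pexp c * (upart c)⁻¹) := by rw [h3]
    _ = (PowerSeries.evalNegHom (upart c) * PowerSeries.evalNegHom (upart c)⁻¹) *
          (pexp c * (upart c)⁻¹) := by ring
    _ = _ := by rw [h2, one_mul]

lemma evalNeg_algebraMap (y : ℂ) :
    PowerSeries.evalNegHom (algebraMap ℂ (PowerSeries ℂ) y) = algebraMap ℂ (PowerSeries ℂ) y := by
  ext k
  simp [PowerSeries.evalNegHom, PowerSeries.coeff_rescale, PowerSeries.coeff_C]
  split_ifs with h
  · simp [h]
  · rfl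

/-- Replacing `X` by `-X` and `y` by `1/y` replaces the coset `θ + ℤ` by `-θ + ℤ`. -/
lemma evalNeg_gNum {y : ℂ} (hy : y ≠ 0) (c : ℝ) {θ : ℝ} (h0 : 0 ≤ θ) (h1 : θ < 1) :
    PowerSeries.evalNegHom (gNum pexp y⁻¹ θ c) * pexp c =
      algebraMap ℂ _ y⁻¹ * gNum pexp y (Int.fract (-θ)) c := by
  by_cases hθ : θ = 0
  · subst hθ
    simp only [gNum, neg_zero, Int.fract_zero, if_true, map_add, map_one, map_mul,
      evalNeg_algebraMap, evalNeg_pexp]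
    have h2 : pexp (-c) * pexp c = 1 := by rw [← pexp_add, neg_add_cancel, pexp_zero]
    have h3 : algebraMap ℂ (PowerSeries ℂ) y⁻¹ * algebraMap ℂ (PowerSeries ℂ) y = 1 := by
      rw [← map_mul, inv_mul_cancel₀ hy, map_one]
    linear_combination algebraMap ℂ (PowerSeries ℂ) y⁻¹ * h2 - pexp c * h3
  · have hf : Int.fract (-θ) = 1 - θ := by
      have : Int.fract θ = θ := Int.fract_eq_self.2 ⟨h0, h1⟩
      rw [Int.fract_neg (by rw [this]; exact hθ), this]
    have h3 : algebraMap ℂ (PowerSeries ℂ) (1 + y⁻¹) =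
        algebraMap ℂ (PowerSeries ℂ) y⁻¹ * algebraMap ℂ (PowerSeries ℂ) (1 + y) := by
      rw [← map_mul]; congr 1; field_simp; ring
    have h4 : pexp ((1 - θ) * c) = pexp (-(θ * c)) * pexp c := by
      rw [← pexp_add]; congr 1; ring
    rw [hf, gNum, gNum, if_neg hθ, if_neg (by linarith), map_mul, evalNeg_algebraMap, evalNeg_pexp,
      h3, h4]
    ring

namespace SimpleData

variable {n : ℕ} {ι : Type} (D : SimpleData n ι)

/-- The regularized contribution of the vertex `v`: the power series obtained from `gVert / gDen`
by multiplication with `X ^ n`. -/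
def localSeries (ξ : (Fin n → ℝ) →ₗ[ℝ] ℝ) (y : ℂ) (v : D.V) : PowerSeries ℂ :=
  ∑ r ∈ (D.basis v).box, ∏ i : D.J v, gNum pexp y ((D.basis v).s i (intVec r)) (ξ (D.u v i)) *
    (upart (ξ (D.u v i)))⁻¹

lemma card_J_coe (v : D.V) : Fintype.card (D.J v) = n := by simp [D.card_J v v.2]

lemma localSeries_mul_gDen {ξ : (Fin n → ℝ) →ₗ[ℝ] ℝ} (hξ : D.Generic ξ) (y : ℂ) (v : D.V) :
    D.localSeries ξ y v * D.gDen ξ pexp v = PowerSeries.X ^ n * D.gVert ξ pexp y v := by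
  rw [localSeries, gDen, gVert, Finset.sum_mul, Finset.mul_sum]
  refine Finset.sum_congr rfl fun r _ => ?_
  have : (PowerSeries.X : PowerSeries ℂ) ^ n = ∏ _i : D.J v, (PowerSeries.X : PowerSeries ℂ) := by
    rw [Finset.prod_const, Finset.card_univ, D.card_J_coe v]
  rw [this, ← Finset.prod_mul_distrib, ← Finset.prod_mul_distrib]
  refine Finset.prod_congr rfl fun i _ => ?_
  rw [upart_spec]
  linear_combination PowerSeries.X * gNum pexp y ((D.basis v).s i (intVec r)) (ξ (D.u v i)) *
    upart_mul_inv (hξ v v.2 i i.2)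

lemma gDen_ne_zero {ξ : (Fin n → ℝ) →ₗ[ℝ] ℝ} (hξ : D.Generic ξ) (v : D.V) :
    D.gDen ξ pexp v ≠ 0 := by
  rw [gDen, Finset.prod_ne_zero_iff]
  intro i _
  rw [upart_spec]
  refine mul_ne_zero PowerSeries.X_ne_zero fun h => upart_const (hξ v v.2 i i.2) ?_
  rw [h, map_zero]

/-- The weighted Brion formula in power series. -/
theorem X_pow_mul_gSum (y : ℂ) {q : ℕ} (hq : 0 < q) {ξ : (Fin n → ℝ) →ₗ[ℝ] ℝ} (hξ : D.Generic ξ) :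
    PowerSeries.X ^ n * D.gSum ξ pexp y q = ∑ v : D.V, pexp (q * ξ v) * D.localSeries ξ y v := by
  have h := D.gDiff_eq_zero pexpHom y hq hξ
  change D.gDiff ξ pexp y q = 0 at h
  rw [gDiff, sub_eq_zero] at h
  have hne : (∏ v : D.V, D.gDen ξ pexp v) ≠ 0 :=
    Finset.prod_ne_zero_iff.2 fun v _ => D.gDen_ne_zero hξ v
  apply mul_left_cancel₀ hne
  rw [mul_left_comm, h, Finset.mul_sum, Finset.mul_sum]
  refine Finset.sum_congr rfl fun v _ => ?_
  rw [← Finset.mul_prod_erase Finset.univ _ (Finset.mem_univ v)]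
  linear_combination (-pexp (q * ξ v) * ∏ w ∈ Finset.univ.erase v, D.gDen ξ pexp w) *
    D.localSeries_mul_gDen hξ y v

/-- The symmetry of the vertex contributions. The substitution permutes the lattice points of the
fundamental parallelepiped by `r ↦ -r` modulo the edge vectors. -/
lemma evalNeg_localSeries {ξ : (Fin n → ℝ) →ₗ[ℝ] ℝ} (hξ : D.Generic ξ) {y : ℂ} (hy : y ≠ 0) (v : D.V) :
    PowerSeries.evalNegHom (D.localSeries ξ y⁻¹ v) =
      algebraMap ℂ _ (y⁻¹ ^ n) * D.localSeries ξ y v := by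
  set L := D.basis v with hL
  have hinv : ∀ r ∈ L.box, L.red (-L.red (-r)) = r := by
    intro r hr
    apply L.ext_s
    intro i
    have hr' := (L.mem_box.1 hr i)
    rw [L.s_red, intVec_neg, map_neg, L.s_red, intVec_neg, map_neg]
    by_cases h0 : L.s i (intVec r) = 0
    · simp [h0]
    · have : Int.fract (L.s i (intVec r)) = L.s i (intVec r) := Int.fract_eq_self.2 hr'
      have h1 : Int.fract (-L.s i (intVec r)) = 1 - L.s i (intVec r) := by
        rw [Int.fract_neg (by rw [this]; exact h0), this]
      rw [h1, neg_sub, Int.fract_sub_one, this]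
  rw [localSeries, localSeries, map_sum, Finset.mul_sum]
  refine Finset.sum_nbij' (fun r => L.red (-r)) (fun r => L.red (-r)) (fun r _ => L.red_mem _)
    (fun r _ => L.red_mem _) hinv hinv fun r hr => ?_
  have : algebraMap ℂ (PowerSeries ℂ) (y⁻¹ ^ n) =
      ∏ _i : D.J v, algebraMap ℂ (PowerSeries ℂ) y⁻¹ := by
    rw [Finset.prod_const, Finset.card_univ, D.card_J_coe v, map_pow]
  rw [this, map_prod, ← Finset.prod_mul_distrib]
  refine Finset.prod_congr rfl fun i _ => ?_
  have hr' := (L.mem_box.1 hr i)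
  rw [map_mul, evalNeg_upart_inv (hξ v v.2 i i.2), ← mul_assoc, evalNeg_gNum hy _ hr'.1 hr'.2,
    L.s_red, intVec_neg, map_neg, mul_assoc]

/-- The polynomial in `q` given by the coefficient of `X ^ (n + d)` in the sum of the vertex
contributions. -/
def ehr (ξ : (Fin n → ℝ) →ₗ[ℝ] ℝ) (d : ℕ) (y : ℂ) : Polynomial ℂ :=
  ∑ v : D.V, ∑ kl ∈ Finset.HasAntidiagonal.antidiagonal (n + d),
    Polynomial.C ((ξ v : ℂ) ^ kl.1 / kl.1.factorial * PowerSeries.coeff kl.2 (D.localSeries ξ y v)) *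
      Polynomial.X ^ kl.1

/-- For a power of a generic linear form, `ehr` interpolates the weighted sum over the faces: compare
coefficients of `X ^ (n + d)` in the weighted Brion formula. -/
lemma ehr_eval (d : ℕ) (y : ℂ) {q : ℕ} (hq : 0 < q) {ξ : (Fin n → ℝ) →ₗ[ℝ] ℝ} (hξ : D.Generic ξ) :
    (D.ehr ξ d y).eval (q : ℂ) = ∑ K ∈ D.faceSets, faceWeight n y K.card *
      ∑ m ∈ D.pts q K, (ξ (intVec m) : ℂ) ^ d / d.factorial := by
  have h := congrArg (PowerSeries.coeff (n + d)) (D.X_pow_mul_gSum y hq hξ)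
  rw [add_comm n d, PowerSeries.coeff_X_pow_mul, gSum, map_sum, map_sum] at h
  have h1 : ∀ K : Finset ι, PowerSeries.coeff d (algebraMap ℂ (PowerSeries ℂ)
      (faceWeight n y K.card) * ∑ m ∈ D.pts q K, pexp (ξ (intVec m))) =
      faceWeight n y K.card * ∑ m ∈ D.pts q K, (ξ (intVec m) : ℂ) ^ d / d.factorial := by
    intro K
    rw [← Algebra.smul_def, PowerSeries.coeff_smul, map_sum, smul_eq_mul]
    simp only [coeff_pexp]
  simp only [h1] at h
  rw [h, ehr, Polynomial.eval_finsetSum]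
  refine Finset.sum_congr rfl fun v _ => ?_
  rw [PowerSeries.coeff_mul, Polynomial.eval_finsetSum, add_comm n d]
  refine Finset.sum_congr rfl fun kl _ => ?_
  rw [coeff_pexp]
  simp only [Polynomial.eval_mul, Polynomial.eval_C, Polynomial.eval_pow, Polynomial.eval_X]
  push_cast
  ring

lemma ehr_symm (d : ℕ) {y : ℂ} (hy : y ≠ 0) {ξ : (Fin n → ℝ) →ₗ[ℝ] ℝ} (hξ : D.Generic ξ) (q : ℂ) :
    (D.ehr ξ d y).eval q = (-y) ^ n * (-1) ^ d * (D.ehr ξ d y⁻¹).eval (-q) := by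
  rw [ehr, ehr, Polynomial.eval_finsetSum, Polynomial.eval_finsetSum, Finset.mul_sum]
  refine Finset.sum_congr rfl fun v _ => ?_
  rw [Polynomial.eval_finsetSum, Polynomial.eval_finsetSum, Finset.mul_sum]
  refine Finset.sum_congr rfl fun kl hkl => ?_
  have h := congrArg (PowerSeries.coeff kl.2) (D.evalNeg_localSeries hξ hy v)
  rw [PowerSeries.evalNegHom, PowerSeries.coeff_rescale, ← Algebra.smul_def,
    PowerSeries.coeff_smul, smul_eq_mul] at h
  have hk : ((-1 : ℂ) ^ kl.1) * (-1) ^ kl.2 = (-1) ^ n * (-1) ^ d := by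
    rw [← pow_add, ← pow_add, Finset.HasAntidiagonal.mem_antidiagonal.1 hkl]
  have hs : ((-1 : ℂ) ^ kl.2) * (-1) ^ kl.2 = 1 := by rw [← mul_pow]; simp
  have hd : ((-1 : ℂ) ^ d) * (-1) ^ d = 1 := by rw [← mul_pow]; simp
  have hn : ((-1 : ℂ) ^ n) * (-1) ^ n = 1 := by rw [← mul_pow]; simp
  have hyn : y ^ n * y⁻¹ ^ n = 1 := by rw [← mul_pow, mul_inv_cancel₀ hy, one_pow]
  simp only [Polynomial.eval_mul, Polynomial.eval_C, Polynomial.eval_pow, Polynomial.eval_X]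
  have h' : PowerSeries.coeff kl.2 (D.localSeries ξ y⁻¹ v) =
      (-1) ^ kl.2 * (y⁻¹ ^ n * PowerSeries.coeff kl.2 (D.localSeries ξ y v)) := by
    rw [← h, ← mul_assoc, hs, one_mul]
  rw [h', neg_pow q, neg_pow y]
  set A := (ξ v : ℂ) ^ kl.1 / kl.1.factorial
  set B := PowerSeries.coeff kl.2 (D.localSeries ξ y v)
  calc A * B * q ^ kl.1 = A * B * q ^ kl.1 * ((-1 : ℂ) ^ n * (-1) ^ n) * ((-1) ^ d * (-1) ^ d) *
        (y ^ n * y⁻¹ ^ n) := by rw [hn, hd, hyn]; ring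
    _ = A * B * q ^ kl.1 * ((-1 : ℂ) ^ n * (-1) ^ d) * (y ^ n * y⁻¹ ^ n) *
        ((-1 : ℂ) ^ kl.1 * (-1) ^ kl.2) := by rw [hk]; ring
    _ = _ := by ring

end SimpleData

/-! ### Powers of generic linear forms span the homogeneous polynomials -/

/-- The linear form with real coefficients `ξ`, as a complex polynomial. -/
def linForm {n : ℕ} (ξ : Fin n → ℝ) : MvPolynomial (Fin n) ℂ :=
  ∑ i, MvPolynomial.C (ξ i : ℂ) * MvPolynomial.X i

lemma linForm_pow {n : ℕ} (ξ : Fin n → ℝ) (d : ℕ) :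
    linForm ξ ^ d = ∑ k ∈ Finset.piAntidiag (Finset.univ : Finset (Fin n)) d,
      ((Nat.multinomial Finset.univ k : ℂ) * ∏ i, (ξ i : ℂ) ^ k i) •
        MvPolynomial.monomial (Finsupp.equivFunOnFinite.symm k) (1 : ℂ) := by
  rw [linForm, Finset.sum_pow_eq_sum_piAntidiag]
  refine Finset.sum_congr rfl fun k _ => ?_
  have : MvPolynomial.monomial (Finsupp.equivFunOnFinite.symm k) (1 : ℂ) =
      ∏ i, MvPolynomial.X i ^ k i := by
    rw [MvPolynomial.monomial_eq, Finsupp.prod_fintype _ _ (fun i => pow_zero _)]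
    simp
  rw [this, MvPolynomial.smul_eq_C_mul]
  simp only [mul_pow, Finset.prod_mul_distrib, map_mul, map_natCast, map_prod, map_pow]
  ring

/-- Powers of real linear forms that vanish at none of the vectors in `W` still span the homogeneous
polynomials: a functional `f` killing them gives a polynomial `ξ ↦ f (ξ ^ d)` vanishing off a
finite union of hyperplanes, hence everywhere. -/
lemma mem_span_linForm {n d : ℕ} (W : Finset (Fin n → ℝ)) (hW : ∀ w ∈ W, w ≠ 0)
    {p : MvPolynomial (Fin n) ℂ} (hp : p.IsHomogeneous d) :
    p ∈ Submodule.span ℂ {P | ∃ ξ : Fin n → ℝ, (∀ w ∈ W, ∑ i, ξ i * w i ≠ 0) ∧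
      P = linForm ξ ^ d} := by
  by_contra hmem
  obtain ⟨f, hf, hker⟩ := Submodule.exists_le_ker_of_notMem hmem
  -- the value of `f` on `linForm ξ ^ d`, as a polynomial in `ξ`
  set Q : MvPolynomial (Fin n) ℂ :=
    ∑ k ∈ Finset.piAntidiag (Finset.univ : Finset (Fin n)) d,
      MvPolynomial.monomial (Finsupp.equivFunOnFinite.symm k)
        ((Nat.multinomial Finset.univ k : ℂ) *
          f (MvPolynomial.monomial (Finsupp.equivFunOnFinite.symm k) (1 : ℂ))) with hQ
  have hQeval : ∀ ξ : Fin n → ℝ, MvPolynomial.eval (fun i => (ξ i : ℂ)) Q = f (linForm ξ ^ d) := by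
    intro ξ
    rw [linForm_pow, hQ, map_sum, map_sum]
    refine Finset.sum_congr rfl fun k _ => ?_
    rw [MvPolynomial.eval_monomial, Finsupp.prod_fintype _ _ (fun i => pow_zero _), map_smul,
      smul_eq_mul]
    simp only [Finsupp.equivFunOnFinite_symm_apply_apply]
    ring
  have hprod : Q * ∏ w ∈ W, linForm w = 0 := by
    apply MvPolynomial.funext_set (fun _ => Set.range (fun x : ℝ => (x : ℂ)))
      (fun _ => Set.infinite_range_of_injective Complex.ofReal_injective)
    intro x hx
    choose ξ hξ using fun i => hx i (Set.mem_univ i)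
    obtain rfl : (fun i => (ξ i : ℂ)) = x := funext hξ
    rw [map_mul, map_prod, map_zero, hQeval]
    by_cases hgen : ∀ w ∈ W, ∑ i, ξ i * w i ≠ 0
    · have h0 : f (linForm ξ ^ d) = 0 := hker (Submodule.subset_span ⟨ξ, hgen, rfl⟩)
      rw [h0, zero_mul]
    · push Not at hgen
      obtain ⟨w, hw, hw0⟩ := hgen
      rw [Finset.prod_eq_zero hw, mul_zero]
      have : ((∑ i, ξ i * w i : ℝ) : ℂ) = 0 := by rw [hw0]; simp
      rw [← this]
      simp [linForm, mul_comm]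
  have hlin : ∀ w ∈ W, linForm w ≠ 0 := by
    intro w hw h
    apply hW w hw
    ext i
    have := congrArg (MvPolynomial.coeff (Finsupp.single i 1)) h
    simpa [linForm, MvPolynomial.coeff_sum, MvPolynomial.coeff_C_mul, MvPolynomial.coeff_X,
      Finsupp.single_left_inj] using this
  have hQ0 : Q = 0 :=
    (mul_eq_zero.1 hprod).resolve_right (Finset.prod_ne_zero_iff.2 hlin)
  have hmon : ∀ k ∈ Finset.piAntidiag (Finset.univ : Finset (Fin n)) d,
      f (MvPolynomial.monomial (Finsupp.equivFunOnFinite.symm k) (1 : ℂ)) = 0 := by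
    intro k hk
    have h1 := congrArg (MvPolynomial.coeff (Finsupp.equivFunOnFinite.symm k)) hQ0
    rw [hQ, MvPolynomial.coeff_sum, Finset.sum_eq_single k, MvPolynomial.coeff_monomial,
      if_pos rfl, MvPolynomial.coeff_zero] at h1
    · refine (mul_eq_zero.1 h1).resolve_left ?_
      exact_mod_cast (Nat.multinomial_pos _ _).ne'
    · intro l _ hl
      rw [MvPolynomial.coeff_monomial, if_neg]
      exact fun h => hl (Finsupp.equivFunOnFinite.symm.injective h)
    · exact fun h => absurd hk h
  apply hf
  rw [p.as_sum, map_sum]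
  refine Finset.sum_eq_zero fun k hk => ?_
  have hdeg : ∑ i, k i = d := by
    have := hp (MvPolynomial.mem_support_iff.1 hk)
    rw [Finsupp.weight_apply, Finsupp.sum_fintype _ _ (by simp)] at this
    simpa using this
  have h1 := hmon k (by simp [Finset.mem_piAntidiag, hdeg])
  have h2 : MvPolynomial.monomial k (MvPolynomial.coeff k p) =
      MvPolynomial.coeff k p • MvPolynomial.monomial
        (Finsupp.equivFunOnFinite.symm (k : Fin n → ℕ)) (1 : ℂ) := by
    rw [MvPolynomial.smul_monomial]; simp
  rw [h2, map_smul, h1, smul_zero]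

namespace SimpleData

variable {n : ℕ} {ι : Type} (D : SimpleData n ι)

/-- The functional equation for the weighted sums of an arbitrary homogeneous polynomial over the
lattice points of the dilated faces. -/
theorem reciprocity {d : ℕ} {p : MvPolynomial (Fin n) ℂ} (hp : p.IsHomogeneous d) :
    ∃ R : ℂ → Polynomial ℂ, ∀ y : ℂ, y ≠ 0 →
      (∀ q : ℕ, 0 < q → (R y).eval (q : ℂ) = ∑ K ∈ D.faceSets, faceWeight n y K.card *
        ∑ m ∈ D.pts q K, MvPolynomial.eval (fun i => (intVec m i : ℂ)) p) ∧
      ∀ z : ℂ, (R y).eval z = (-y) ^ n * (-1) ^ d * (R y⁻¹).eval (-z) := by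
  have hspan := mem_span_linForm D.edges D.edges_ne_zero hp
  clear hp
  induction hspan using Submodule.span_induction with
  | mem P hP =>
    obtain ⟨ξ, hξ, rfl⟩ := hP
    set ζ : (Fin n → ℝ) →ₗ[ℝ] ℝ := ∑ i, ξ i • LinearMap.proj i with hζ
    have hζa : ∀ x, ζ x = ∑ i, ξ i * x i := by intro x; simp [hζ]
    have hgen : D.Generic ζ := by
      rw [generic_iff]
      intro e he
      rw [hζa]
      exact hξ e he
    refine ⟨fun y => Polynomial.C (d.factorial : ℂ) * D.ehr ζ d y, fun y hy => ⟨fun q hq => ?_,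
      fun z => ?_⟩⟩
    · rw [Polynomial.eval_mul, Polynomial.eval_C, D.ehr_eval d y hq hgen, Finset.mul_sum]
      refine Finset.sum_congr rfl fun K _ => ?_
      rw [mul_left_comm, Finset.mul_sum]
      congr 1
      refine Finset.sum_congr rfl fun m _ => ?_
      have hfac : (d.factorial : ℂ) ≠ 0 := by exact_mod_cast d.factorial_ne_zero
      rw [mul_div_cancel₀ _ hfac, map_pow, hζa]
      simp [linForm]
    · simp only [Polynomial.eval_mul, Polynomial.eval_C]
      rw [D.ehr_symm d hy hgen z]
      ring
  | zero => exact ⟨fun _ => 0, fun y _ => by simp⟩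
  | add p₁ p₂ _ _ h₁ h₂ =>
    obtain ⟨R₁, h₁⟩ := h₁
    obtain ⟨R₂, h₂⟩ := h₂
    refine ⟨fun y => R₁ y + R₂ y, fun y hy => ⟨fun q hq => ?_, fun z => ?_⟩⟩
    · simp only [Polynomial.eval_add, map_add, (h₁ y hy).1 q hq, (h₂ y hy).1 q hq,
        Finset.sum_add_distrib, mul_add]
    · simp only [Polynomial.eval_add]
      rw [(h₁ y hy).2 z, (h₂ y hy).2 z]
      ring
  | smul c p₁ _ h₁ =>
    obtain ⟨R₁, h₁⟩ := h₁
    refine ⟨fun y => Polynomial.C c * R₁ y, fun y hy => ⟨fun q hq => ?_, fun z => ?_⟩⟩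
    · rw [Polynomial.eval_mul, Polynomial.eval_C, (h₁ y hy).1 q hq, Finset.mul_sum]
      refine Finset.sum_congr rfl fun K _ => ?_
      rw [mul_left_comm, Finset.mul_sum]
      simp only [MvPolynomial.smul_eval]
    · simp only [Polynomial.eval_mul, Polynomial.eval_C]
      rw [(h₁ y hy).2 z]
      ring

end SimpleData

/-! ### Edges at a vertex of a polytope -/

section Vertex

variable {n : ℕ}

lemma faceDim_eq {F : Set (Fin n → ℝ)} {v : Fin n → ℝ} (hv : v ∈ F) :
    faceDim F = Module.finrank ℝ (Submodule.span ℝ ((fun x => x - v) '' F)) := by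
  rw [faceDim, direction_affineSpan, vectorSpan_eq_span_vsub_set_right ℝ hv]
  rfl

/-- The convex cone generated by a set of vectors. -/
abbrev coneOf (T : Set (Fin n → ℝ)) : Submodule NNReal (Fin n → ℝ) := Submodule.span NNReal T

lemma convex_coneOf (T : Set (Fin n → ℝ)) : Convex ℝ (coneOf T : Set (Fin n → ℝ)) := by
  intro x hx y hy a b ha hb _
  exact (coneOf T).add_mem ((coneOf T).smul_mem ⟨a, ha⟩ hx) ((coneOf T).smul_mem ⟨b, hb⟩ hy)

lemma coneOf_le_span (T : Set (Fin n → ℝ)) {x : Fin n → ℝ} (hx : x ∈ coneOf T) :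
    x ∈ Submodule.span ℝ T := by
  have : coneOf T ≤ (Submodule.span ℝ T).restrictScalars NNReal :=
    Submodule.span_le.2 Submodule.subset_span
  exact this hx

/-- A vector of a minimal generating set of a pointed cone spans an exposed ray. -/
lemma exists_ray_functional {T : Finset (Fin n → ℝ)} {f : (Fin n → ℝ) →ₗ[ℝ] ℝ}
    (hf : ∀ t ∈ T, f t < 0) {t : Fin n → ℝ} (ht : t ∈ T)
    (hmin : t ∉ coneOf (T.erase t : Set (Fin n → ℝ))) :
    ∃ g : (Fin n → ℝ) →ₗ[ℝ] ℝ, g t = 0 ∧ ∀ s ∈ T, s ≠ t → g s < 0 := by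
  set K := convexHull ℝ (T.erase t : Set (Fin n → ℝ)) with hK
  have hKcone : K ⊆ coneOf (T.erase t : Set (Fin n → ℝ)) :=
    convexHull_min Submodule.subset_span (convex_coneOf _)
  have hKneg : K ⊆ {x | f x < 0} :=
    convexHull_min (fun s hs => hf s (Finset.mem_of_mem_erase hs))
      (convex_halfSpace_lt f.isLinear 0)
  have hdisj : Disjoint K (Submodule.span ℝ {t} : Set (Fin n → ℝ)) := by
    rw [Set.disjoint_left]
    intro x hxK hxt
    obtain ⟨c, rfl⟩ := Submodule.mem_span_singleton.1 hxt
    have h1 : f (c • t) < 0 := hKneg hxK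
    rw [map_smul, smul_eq_mul] at h1
    have h2 := hf t ht
    have hc : 0 < c := by
      by_contra h
      push Not at h
      nlinarith
    apply hmin
    have h3 := (coneOf (T.erase t : Set (Fin n → ℝ))).smul_mem ⟨c⁻¹, (inv_pos.2 hc).le⟩
      (hKcone hxK)
    change (c⁻¹ : ℝ) • c • t ∈ _ at h3
    rwa [smul_smul, inv_mul_cancel₀ hc.ne', one_smul] at h3
  obtain ⟨g, a, b, hga, hab, hgb⟩ := geometric_hahn_banach_compact_closed (convex_convexHull ℝ _)
    ((T.erase t).finite_toSet.isCompact_convexHull (𝕜 := ℝ)) (Submodule.convex _)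
    (Submodule.closed_of_finiteDimensional _) hdisj
  have hb0 : b < 0 := by simpa using hgb 0 (Submodule.zero_mem _)
  have hgt : g t = 0 := by
    by_contra hne
    have := hgb ((b / g t) • t) (Submodule.smul_mem _ _ (Submodule.mem_span_singleton_self t))
    rw [map_smul, smul_eq_mul, div_mul_cancel₀ _ hne] at this
    exact lt_irrefl _ this
  refine ⟨g.toLinearMap, hgt, fun s hs hst => ?_⟩
  have := hga s (subset_convexHull ℝ _ (Finset.mem_coe.2 (Finset.mem_erase.2 ⟨hst, hs⟩)))
  exact this.trans (hab.trans hb0)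

variable {P : Set (Fin n → ℝ)} {S : Finset (Fin n → ℤ)}

/-- At a vertex of a simple lattice polytope, the edge directions form a basis, and the polytope
lies in the cone that they generate. -/
theorem exists_local_basis (hP : P = convexHull ℝ (intVec '' (S : Set (Fin n → ℤ))))
    (hfull : affineSpan ℝ P = ⊤) (hsimple : IsSimple P)
    (hfin : {F : Set (Fin n → ℝ) | IsFaceOf P F}.Finite)
    {v : Fin n → ℝ} (hv : v ∈ P.extremePoints ℝ) :
    ∃ b : Module.Basis (Fin n) ℝ (Fin n → ℝ), (∀ i, v + b i ∈ P) ∧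
      (∀ x ∈ P, ∀ i, 0 ≤ b.repr (x - v) i) ∧ ∀ i, ∃ m : Fin n → ℤ, b i = intVec m := by
  have hvP : v ∈ P := hv.1
  have hSP : intVec '' (S : Set (Fin n → ℤ)) ⊆ P := hP ▸ subset_convexHull ℝ _
  have hvS : v ∈ intVec '' (S : Set (Fin n → ℤ)) := by
    rw [hP] at hv; exact extremePoints_convexHull_subset hv
  obtain ⟨mv, -, hmv⟩ := hvS
  -- a functional exposing `v`
  obtain ⟨f, hf⟩ : ∃ f : (Fin n → ℝ) →ₗ[ℝ] ℝ, ∀ s ∈ S, intVec s ≠ v → f (intVec s - v) < 0 := by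
    set K := convexHull ℝ ((S.image intVec).erase v : Set (Fin n → ℝ)) with hK
    have hvK : v ∉ K := by
      intro h
      have hcv : Convex ℝ P := hP ▸ convex_convexHull ℝ _
      have := (hcv.mem_extremePoints_iff_mem_sdiff_convexHull_sdiff.1 hv).2
      apply this
      refine convexHull_mono ?_ h
      intro s hs
      rw [Finset.mem_coe, Finset.mem_erase] at hs
      refine ⟨hSP ?_, hs.1⟩
      obtain ⟨k, hk, rfl⟩ := Finset.mem_image.1 hs.2
      exact ⟨k, hk, rfl⟩
    obtain ⟨g, a, hga, hav⟩ := geometric_hahn_banach_closed_point (convex_convexHull ℝ _)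
      ((Finset.finite_toSet _).isCompact_convexHull (𝕜 := ℝ)).isClosed hvK
    refine ⟨g.toLinearMap, fun s hs hsv => ?_⟩
    have := hga (intVec s) (subset_convexHull ℝ _ (Finset.mem_coe.2
      (Finset.mem_erase.2 ⟨hsv, Finset.mem_image_of_mem _ hs⟩)))
    rw [map_sub]
    change g _ - g _ < 0
    linarith
  -- the nonzero difference vectors, and a minimal set of generators of their cone
  set Z : Finset (Fin n → ℝ) := (S.image fun s => intVec s - v).erase 0 with hZ
  have hZmem : ∀ z ∈ Z, ∃ s ∈ S, intVec s ≠ v ∧ intVec s - v = z := by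
    intro z hz
    rw [hZ, Finset.mem_erase, Finset.mem_image] at hz
    obtain ⟨hz0, s, hs, rfl⟩ := hz
    exact ⟨s, hs, fun h => hz0 (by rw [h, sub_self]), rfl⟩
  have hfZ : ∀ z ∈ Z, f z < 0 := by
    intro z hz
    obtain ⟨s, hs, hsv, rfl⟩ := hZmem z hz
    exact hf s hs hsv
  obtain ⟨T, hT, hTmin⟩ := Finset.exists_min_image
    (Z.powerset.filter fun T : Finset (Fin n → ℝ) => (Z : Set (Fin n → ℝ)) ⊆ coneOf (T : Set (Fin n → ℝ)))
    Finset.card ⟨Z, Finset.mem_filter.2 ⟨Finset.mem_powerset_self Z, Submodule.subset_span⟩⟩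
  rw [Finset.mem_filter, Finset.mem_powerset] at hT
  obtain ⟨hTZ, hZT⟩ := hT
  have hirr : ∀ t ∈ T, t ∉ coneOf (T.erase t : Set (Fin n → ℝ)) := by
    intro t ht hmem
    have hle : coneOf (T : Set (Fin n → ℝ)) ≤ coneOf (T.erase t : Set (Fin n → ℝ)) := by
      refine Submodule.span_le.2 fun s hs => ?_
      by_cases hst : s = t
      · subst hst; exact hmem
      · exact Submodule.subset_span (Finset.mem_coe.2 (Finset.mem_erase.2 ⟨hst, hs⟩))
    have := hTmin (T.erase t) (Finset.mem_filter.2 ⟨Finset.mem_powerset.2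
      ((Finset.erase_subset _ _).trans hTZ), fun z hz => hle (hZT hz)⟩)
    exact absurd this (not_le.2 (Finset.card_erase_lt_of_mem ht))
  have hPcone : ∀ x ∈ P, x - v ∈ coneOf (T : Set (Fin n → ℝ)) := by
    have hsub : P ⊆ {x | x - v ∈ coneOf (T : Set (Fin n → ℝ))} := by
      rw [hP]
      refine convexHull_min ?_ ?_
      · rintro _ ⟨s, hs, rfl⟩
        by_cases hsv : intVec s = v
        · change intVec s - v ∈ coneOf _
          rw [hsv, sub_self]; exact Submodule.zero_mem _
        · exact hZT (Finset.mem_coe.2 (Finset.mem_erase.2 ⟨sub_ne_zero.2 hsv,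
            Finset.mem_image.2 ⟨s, hs, rfl⟩⟩))
      · intro x hx y hy a c ha hc hac
        have h := convex_coneOf (T : Set (Fin n → ℝ)) hx hy ha hc hac
        have he : a • x + c • y - v = a • (x - v) + c • (y - v) := by
          rw [smul_sub, smul_sub, sub_add_sub_comm, ← add_smul, hac, one_smul]
        change a • x + c • y - v ∈ coneOf _
        rw [he]
        exact h
    exact fun x hx => hsub hx
  have hTP : ∀ t ∈ T, v + t ∈ P := by
    intro t ht
    obtain ⟨s, hs, -, rfl⟩ := hZmem t (hTZ ht)
    rw [add_sub_cancel]
    exact hSP ⟨s, hs, rfl⟩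
  have hspan : Submodule.span ℝ (T : Set (Fin n → ℝ)) = ⊤ := by
    have h1 : vectorSpan ℝ P = ⊤ := by rw [← direction_affineSpan, hfull]; simp
    rw [vectorSpan_eq_span_vsub_set_right ℝ hvP] at h1
    rw [eq_top_iff, ← h1, Submodule.span_le]
    rintro _ ⟨x, hx, rfl⟩
    exact coneOf_le_span _ (hPcone x hx)
  -- the edges spanned by the minimal generators
  have hedge : ∀ t ∈ T, ∃ A : Set (Fin n → ℝ), IsFaceOf P A ∧ faceDim A = 1 ∧ {v} ⊆ A ∧
      v + t ∈ A ∧ ∀ x ∈ A, ∃ c : NNReal, x - v = c • t := by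
    intro t ht
    obtain ⟨g, hgt, hgs⟩ := exists_ray_functional (fun s hs => hfZ s (hTZ hs)) ht (hirr t ht)
    have hcone : ∀ z ∈ coneOf (T : Set (Fin n → ℝ)), g z ≤ 0 ∧ (g z = 0 → ∃ c : NNReal, z = c • t) := by
      intro z hz
      induction hz using Submodule.span_induction with
      | mem z hz =>
        by_cases hzt : z = t
        · subst hzt; exact ⟨hgt.le, fun _ => ⟨1, (one_smul _ _).symm⟩⟩
        · have := hgs z hz hzt
          exact ⟨this.le, fun h => absurd h this.ne⟩
      | zero => exact ⟨by simp, fun _ => ⟨0, by simp⟩⟩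
      | add x y _ _ hx hy =>
        rw [map_add]
        refine ⟨by linarith [hx.1, hy.1], fun h => ?_⟩
        obtain ⟨c, hc⟩ := hx.2 (by linarith [hx.1, hy.1])
        obtain ⟨c', hc'⟩ := hy.2 (by linarith [hx.1, hy.1])
        exact ⟨c + c', by rw [add_smul, ← hc, ← hc']⟩
      | smul a x _ hx =>
        have hga : g (a • x) = (a : ℝ) * g x := by
          rw [NNReal.smul_def, map_smul, smul_eq_mul]
        rw [hga]
        refine ⟨mul_nonpos_of_nonneg_of_nonpos a.2 hx.1, fun h => ?_⟩
        rcases mul_eq_zero.1 h with h | h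
        · exact ⟨0, by rw [NNReal.smul_def, h]; simp⟩
        · obtain ⟨c, hc⟩ := hx.2 h
          exact ⟨a * c, by rw [hc, smul_smul]⟩
    have hle : ∀ p ∈ P, g p ≤ g v := by
      intro p hp
      have := (hcone _ (hPcone p hp)).1
      rw [map_sub] at this
      linarith
    set A : Set (Fin n → ℝ) := {x | x ∈ P ∧ ∀ p ∈ P, g p ≤ g x} with hA
    have hvA : v ∈ A := ⟨hvP, hle⟩
    have htA : v + t ∈ A := ⟨hTP t ht, fun p hp => by rw [map_add, hgt, add_zero]; exact hle p hp⟩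
    have hAx : ∀ x ∈ A, ∃ c : NNReal, x - v = c • t := by
      intro x hx
      refine (hcone _ (hPcone x hx.1)).2 ?_
      rw [map_sub]
      linarith [hx.2 v hvP, hle x hx.1]
    refine ⟨A, Or.inr ⟨⟨v, hvA⟩, g, rfl⟩, ?_, Set.singleton_subset_iff.2 hvA, htA, hAx⟩
    have ht0 : t ≠ 0 := by
      rintro rfl
      have := hfZ 0 (hTZ ht)
      simp at this
    rw [faceDim_eq hvA, ← finrank_span_singleton (K := ℝ) ht0]
    have hspan_eq : Submodule.span ℝ ((fun x => x - v) '' A) = Submodule.span ℝ {t} := by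
      apply le_antisymm
      · rw [Submodule.span_le]
        rintro _ ⟨x, hx, rfl⟩
        obtain ⟨c, hc⟩ := hAx x hx
        exact Submodule.mem_span_singleton.2 ⟨c, hc.symm⟩
      · rw [Submodule.span_singleton_le_iff_mem]
        exact Submodule.subset_span ⟨v + t, htA, by simp⟩
    rw [hspan_eq]
  have hvface : IsFaceOf P {v} := by
    refine Or.inr ⟨⟨v, rfl⟩, f, ?_⟩
    have hsub : ∀ z ∈ coneOf (T : Set (Fin n → ℝ)), f z ≤ 0 ∧ (f z = 0 → z = 0) := by
      intro z hz
      induction hz using Submodule.span_induction with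
      | mem z hz =>
        have := hfZ z (hTZ hz)
        exact ⟨this.le, fun h => absurd h this.ne⟩
      | zero => simp
      | add x y _ _ hx hy =>
        rw [map_add]
        refine ⟨by linarith [hx.1, hy.1], fun h => ?_⟩
        rw [hx.2 (by linarith [hx.1, hy.1]), hy.2 (by linarith [hx.1, hy.1]), add_zero]
      | smul a x _ hx =>
        have hga : f (a • x) = (a : ℝ) * f x := by
          rw [NNReal.smul_def, map_smul, smul_eq_mul]
        rw [hga]
        refine ⟨mul_nonpos_of_nonneg_of_nonpos a.2 hx.1, fun h => ?_⟩
        rcases mul_eq_zero.1 h with h | h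
        · rw [NNReal.smul_def, h, zero_smul]
        · rw [hx.2 h, smul_zero]
    ext x
    constructor
    · rintro rfl
      refine ⟨hvP, fun p hp => ?_⟩
      have := (hsub _ (hPcone p hp)).1
      rw [map_sub] at this
      linarith
    · rintro ⟨hxP, hx⟩
      have h1 := hsub _ (hPcone x hxP)
      rw [map_sub] at h1
      exact sub_eq_zero.1 (h1.2 (le_antisymm h1.1 (by linarith [hx v hvP])))
  have hcard : T.card ≤ n := by
    have hn := hsimple {v} hvface (by rw [faceDim_eq (Set.mem_singleton v)]; simp)
    choose! A hA using hedge
    refine le_trans ?_ hn.le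
    rw [← Set.ncard_coe_finset]
    refine Set.ncard_le_ncard_of_injOn A (fun t ht => ⟨(hA t ht).1, (hA t ht).2.1, (hA t ht).2.2.1⟩)
      ?_ (hfin.subset fun E hE => hE.1)
    intro t ht s hs hts
    by_contra hne
    obtain ⟨c, hc⟩ := (hA t ht).2.2.2.2 (v + s) (by rw [hts]; exact (hA s hs).2.2.2.1)
    rw [add_sub_cancel_left] at hc
    refine hirr s hs ?_
    rw [hc]
    refine Submodule.smul_mem _ _ (Submodule.subset_span ?_)
    rw [← hc]
    exact Finset.mem_coe.2 (Finset.mem_erase.2 ⟨hne, ht⟩)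
  have hcard' : T.card = n := by
    apply le_antisymm hcard
    have := finrank_span_finset_le_card (R := ℝ) T
    rw [Set.finrank, hspan] at this
    simpa using this
  set b₀ : Module.Basis T ℝ (Fin n → ℝ) := basisOfTopLeSpanOfCardEqFinrank
    (fun t : T => (t : Fin n → ℝ)) (by simp [hspan]) (by simp [hcard']) with hb₀
  have hb₀t : ∀ t : T, b₀ t = t := fun t => by simp [hb₀]
  have e : T ≃ Fin n := Fintype.equivFinOfCardEq (by simp [hcard'])
  refine ⟨b₀.reindex e, fun i => ?_, fun x hx i => ?_, fun i => ?_⟩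
  · rw [Module.Basis.reindex_apply, hb₀t]; exact hTP _ (e.symm i).2
  · rw [Module.Basis.repr_reindex_apply]
    have : ∀ z ∈ coneOf (T : Set (Fin n → ℝ)), ∀ j, 0 ≤ b₀.repr z j := by
      intro z hz j
      induction hz using Submodule.span_induction with
      | mem z hz =>
        have : z = b₀ ⟨z, hz⟩ := (hb₀t ⟨z, hz⟩).symm
        rw [this, Module.Basis.repr_self, Finsupp.single_apply]
        split_ifs <;> norm_num
      | zero => simp
      | add x y _ _ hx hy => rw [map_add, Finsupp.add_apply]; exact add_nonneg hx hy
      | smul a x _ hx =>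
        rw [NNReal.smul_def, map_smul, Finsupp.smul_apply, smul_eq_mul]
        exact mul_nonneg a.2 hx
    exact this _ (hPcone x hx) _
  · rw [Module.Basis.reindex_apply, hb₀t]
    obtain ⟨s, -, -, hs⟩ := hZmem _ (hTZ (e.symm i).2)
    exact ⟨s + -mv, by rw [intVec_add, intVec_neg, hmv, ← hs, sub_eq_add_neg]⟩

end Vertex

/-! ### Faces through a vertex -/

section Cells

variable {n : ℕ} {P : Set (Fin n → ℝ)}

/-- The part of `P` on which the coordinates in `I` vanish, for the coordinate system with origin
`v` and basis `b`. -/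
def cell (P : Set (Fin n → ℝ)) (v : Fin n → ℝ) (b : Module.Basis (Fin n) ℝ (Fin n → ℝ))
    (I : Finset (Fin n)) : Set (Fin n → ℝ) := {x | x ∈ P ∧ ∀ i ∈ I, b.repr (x - v) i = 0}

variable {v : Fin n → ℝ} {b : Module.Basis (Fin n) ℝ (Fin n → ℝ)}

lemma mem_cell_self (hv : v ∈ P) (I : Finset (Fin n)) : v ∈ cell P v b I :=
  ⟨hv, fun i _ => by simp⟩

lemma edge_mem_cell (hb : ∀ i, v + b i ∈ P) {I : Finset (Fin n)} {i : Fin n} :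
    v + b i ∈ cell P v b I ↔ i ∉ I := by
  constructor
  · intro h hi
    have := h.2 i hi
    simp at this
  · intro hi
    refine ⟨hb i, fun j hj => ?_⟩
    have hij : i ≠ j := by rintro rfl; exact hi hj
    simp [hij]

lemma cell_isFaceOf (hv : v ∈ P) (hpos : ∀ x ∈ P, ∀ i, 0 ≤ b.repr (x - v) i)
    (I : Finset (Fin n)) : IsFaceOf P (cell P v b I) := by
  refine Or.inr ⟨⟨v, mem_cell_self hv I⟩, -∑ i ∈ I, b.coord i, ?_⟩
  have heval : ∀ x, (-∑ i ∈ I, b.coord i) x =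
      -(∑ i ∈ I, b.repr (x - v) i) + (-∑ i ∈ I, b.coord i) v := by
    intro x
    simp [LinearMap.sum_apply, Finset.sum_sub_distrib]
    ring
  ext x
  constructor
  · rintro ⟨hx, h0⟩
    refine ⟨hx, fun p hp => ?_⟩
    rw [heval p, heval x, Finset.sum_eq_zero h0]
    have := Finset.sum_nonneg fun i (_ : i ∈ I) => hpos p hp i
    linarith
  · rintro ⟨hx, hmax⟩
    refine ⟨hx, ?_⟩
    have h1 := hmax v hv
    rw [heval x] at h1
    have h2 := Finset.sum_nonneg fun i (_ : i ∈ I) => hpos x hx i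
    exact (Finset.sum_eq_zero_iff_of_nonneg fun i _ => hpos x hx i).1 (by linarith)

lemma faceDim_cell (hv : v ∈ P) (hb : ∀ i, v + b i ∈ P) (I : Finset (Fin n)) :
    faceDim (cell P v b I) = n - I.card := by
  rw [faceDim_eq (mem_cell_self hv I)]
  have hspan : Submodule.span ℝ ((fun x => x - v) '' cell P v b I) =
      Submodule.span ℝ (Set.range fun i : {i // i ∉ I} => b i) := by
    apply le_antisymm
    · rw [Submodule.span_le]
      rintro _ ⟨x, hx, rfl⟩
      change x - v ∈ Submodule.span ℝ _
      rw [← b.sum_repr (x - v)]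
      refine Submodule.sum_mem _ fun i _ => ?_
      by_cases hi : i ∈ I
      · rw [hx.2 i hi, zero_smul]; exact Submodule.zero_mem _
      · exact Submodule.smul_mem _ _ (Submodule.subset_span ⟨⟨i, hi⟩, rfl⟩)
    · rw [Submodule.span_le]
      rintro _ ⟨i, rfl⟩
      exact Submodule.subset_span ⟨v + b i, (edge_mem_cell hb).2 i.2, by simp⟩
  rw [hspan]
  refine (finrank_span_eq_card (b.linearIndependent.comp (Subtype.val : {i // i ∉ I} → Fin n)
    Subtype.val_injective)).trans ?_
  simp [Fintype.card_subtype_compl]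

lemma IsFaceOf.exists_functional {F : Set (Fin n → ℝ)} (hF : IsFaceOf P F) :
    ∃ u : (Fin n → ℝ) →ₗ[ℝ] ℝ, F = {x | x ∈ P ∧ ∀ p ∈ P, u p ≤ u x} := by
  rcases hF with rfl | ⟨-, h⟩
  · exact ⟨0, by ext; simp⟩
  · exact h

/-- A face through `v` is determined by the edges at `v` on which its functional does not vanish. -/
lemma IsFaceOf.eq_cell (hv : v ∈ P) (hb : ∀ i, v + b i ∈ P)
    (hpos : ∀ x ∈ P, ∀ i, 0 ≤ b.repr (x - v) i) {F : Set (Fin n → ℝ)} (hF : IsFaceOf P F)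
    (hvF : v ∈ F) : ∃ I, F = cell P v b I := by
  obtain ⟨u, rfl⟩ := hF.exists_functional
  refine ⟨Finset.univ.filter fun i => u (b i) ≠ 0, ?_⟩
  have hneg : ∀ i, u (b i) ≤ 0 := by
    intro i
    have := hvF.2 _ (hb i)
    rw [map_add] at this
    linarith
  have heval : ∀ x, u x - u v = ∑ i, b.repr (x - v) i * u (b i) := by
    intro x
    rw [← map_sub]
    conv_lhs => rw [← b.sum_repr (x - v)]
    simp only [map_sum, map_smul, smul_eq_mul]
  ext x
  constructor
  · rintro ⟨hx, hmax⟩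
    refine ⟨hx, fun i hi => ?_⟩
    have h0 : ∑ i, b.repr (x - v) i * u (b i) = 0 := by
      rw [← heval]
      linarith [hmax v hv, hvF.2 x hx]
    have := (Finset.sum_eq_zero_iff_of_nonpos fun i _ =>
      mul_nonpos_of_nonneg_of_nonpos (hpos x hx i) (hneg i)).1 h0 i (Finset.mem_univ i)
    exact (mul_eq_zero.1 this).resolve_right (Finset.mem_filter.1 hi).2
  · rintro ⟨hx, h0⟩
    refine ⟨hx, fun p hp => (hvF.2 p hp).trans ?_⟩
    have : u x - u v = 0 := by
      rw [heval]
      refine Finset.sum_eq_zero fun i _ => ?_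
      by_cases hi : u (b i) = 0
      · rw [hi, mul_zero]
      · rw [h0 i (by simp [hi]), zero_mul]
    linarith

lemma isExtreme_argmax (F : Set (Fin n → ℝ)) (u : (Fin n → ℝ) →ₗ[ℝ] ℝ) :
    IsExtreme ℝ F {x | x ∈ F ∧ ∀ p ∈ F, u p ≤ u x} := by
  refine ⟨fun x hx => hx.1, ?_⟩
  rintro x hx y hy z ⟨hz, hmax⟩ ⟨a, c, ha, hc, hac, rfl⟩
  refine ⟨hx, fun p hp => (hmax p hp).trans ?_⟩
  have h := hmax y hy
  simp only [map_add, map_smul, smul_eq_mul] at h ⊢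
  have hc' : c = 1 - a := by linarith
  subst hc'
  nlinarith

lemma isCompact_argmax {F : Set (Fin n → ℝ)} (hF : IsCompact F) (u : (Fin n → ℝ) →ₗ[ℝ] ℝ) :
    IsCompact {x | x ∈ F ∧ ∀ p ∈ F, u p ≤ u x} := by
  have hu : Continuous u := u.continuous_of_finiteDimensional
  have : {x | x ∈ F ∧ ∀ p ∈ F, u p ≤ u x} = F ∩ ⋂ p ∈ F, {x | u p ≤ u x} := by
    ext x; simp
  rw [this]
  exact hF.inter_right (isClosed_biInter fun p _ => isClosed_le continuous_const hu)

/-- A nonempty face is the zero set of an affine function that is nonnegative on the polytope. -/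
lemma IsFaceOf.exists_affine {F : Set (Fin n → ℝ)} (hF : IsFaceOf P F) (hne : F.Nonempty) :
    ∃ (a : (Fin n → ℝ) →ₗ[ℝ] ℝ) (c : ℝ), ∀ x ∈ P, 0 ≤ a x + c ∧ (a x + c = 0 ↔ x ∈ F) := by
  obtain ⟨u, rfl⟩ := hF.exists_functional
  obtain ⟨z, hz, hmax⟩ := hne
  refine ⟨-u, u z, fun x hx => ?_⟩
  have h1 := hmax x hx
  simp only [LinearMap.neg_apply]
  refine ⟨by linarith, fun h => ⟨hx, fun p hp => ?_⟩, fun h => ?_⟩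
  · linarith [hmax p hp]
  · linarith [h.2 z hz]

end Cells

/-! ### The combinatorial data of a simple lattice polytope -/

/-- A simple lattice polytope gives rise to a `SimpleData`, in which the facet sets with a common
vertex correspond bijectively to the faces. -/
theorem exists_simpleData {n : ℕ} {P : Set (Fin n → ℝ)} {S : Finset (Fin n → ℤ)}
    (hP : P = convexHull ℝ (intVec '' (S : Set (Fin n → ℤ))))
    (hfull : affineSpan ℝ P = ⊤) (hsimple : IsSimple P)
    (hfin : {F : Set (Fin n → ℝ) | IsFaceOf P F}.Finite) :
    ∃ (ι : Type) (D : SimpleData n ι),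
      (∀ K ∈ D.faceSets, IsFaceOf P (D.face K) ∧ K.card ≤ n ∧
        faceDim (D.face K) = n - K.card) ∧
      Set.InjOn D.face D.faceSets ∧ ∀ F, IsFaceOf P F → ∃ K ∈ D.faceSets, D.face K = F := by
  have hSfin : (intVec '' (S : Set (Fin n → ℤ))).Finite := S.finite_toSet.image _
  have hcompact : IsCompact P := hP ▸ hSfin.isCompact_convexHull (𝕜 := ℝ)
  have hconvex : Convex ℝ P := hP ▸ convex_convexHull ℝ _
  have hextS : P.extremePoints ℝ ⊆ intVec '' (S : Set (Fin n → ℤ)) := by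
    rw [hP]; exact extremePoints_convexHull_subset
  have hne : P.Nonempty := by
    rw [← affineSpan_nonempty (k := ℝ), hfull]
    exact Set.univ_nonempty
  have hfne : ∀ F, IsFaceOf P F → F.Nonempty := by
    rintro F (rfl | h)
    · exact hne
    · exact h.1
  have hfext : ∀ F, IsFaceOf P F → IsExtreme ℝ P F ∧ IsCompact F := by
    intro F hF
    obtain ⟨u, rfl⟩ := hF.exists_functional
    exact ⟨isExtreme_argmax P u, isCompact_argmax hcompact u⟩
  have hVfin : (P.extremePoints ℝ).Finite := hSfin.subset hextS
  -- local coordinates at the vertices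
  have : Nonempty (Module.Basis (Fin n) ℝ (Fin n → ℝ)) := ⟨Pi.basisFun ℝ _⟩
  have hloc : ∀ v ∈ P.extremePoints ℝ, ∃ b : Module.Basis (Fin n) ℝ (Fin n → ℝ),
      (∀ i, v + b i ∈ P) ∧ (∀ x ∈ P, ∀ i, 0 ≤ b.repr (x - v) i) ∧
        ∀ i, ∃ m : Fin n → ℤ, b i = intVec m :=
    fun v hv => exists_local_basis hP hfull hsimple hfin hv
  choose! bs hbs hpos hbint using hloc
  -- facets and their equations
  let ι : Type := {A : Set (Fin n → ℝ) // IsFaceOf P A ∧ faceDim A + 1 = n}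
  have : Finite ι := (hfin.subset fun A (hA : IsFaceOf P A ∧ faceDim A + 1 = n) => hA.1).to_subtype
  have : Fintype ι := Fintype.ofFinite ι
  have hαex : ∀ A : ι, ∃ (a : (Fin n → ℝ) →ₗ[ℝ] ℝ) (c : ℝ), ∀ x ∈ P,
      0 ≤ a x + c ∧ (a x + c = 0 ↔ x ∈ A.1) :=
    fun A => A.2.1.exists_affine (hfne _ A.2.1)
  choose α c hα using hαex
  have hfacet : ∀ v ∈ P.extremePoints ℝ, ∀ A : ι, v ∈ A.1 → ∃ i, A.1 = cell P v (bs v) {i} := by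
    intro v hv A hvA
    obtain ⟨I, hI⟩ := A.2.1.eq_cell hv.1 (hbs v hv) (hpos v hv) hvA
    have hdim := faceDim_cell hv.1 (hbs v hv) I
    rw [← hI] at hdim
    have h1 := A.2.2
    have h2 : I.card ≤ n := by simpa using I.card_le_univ
    obtain ⟨i, rfl⟩ := Finset.card_eq_one.1 (show I.card = 1 by omega)
    exact ⟨i, hI⟩
  have hfacet' : ∀ v ∈ P.extremePoints ℝ, ∀ i, ∃ A : ι, A.1 = cell P v (bs v) {i} := by
    intro v hv i
    refine ⟨⟨cell P v (bs v) {i}, cell_isFaceOf hv.1 (hpos v hv) _, ?_⟩, rfl⟩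
    rw [faceDim_cell hv.1 (hbs v hv)]
    have := i.2
    simp
    omega
  have hcellinj : ∀ v ∈ P.extremePoints ℝ, ∀ i j,
      cell P v (bs v) {i} = cell P v (bs v) {j} → i = j := by
    intro v hv i j hij
    by_contra hne
    have h1 : v + bs v i ∈ cell P v (bs v) {j} := (edge_mem_cell (hbs v hv)).2 (by simpa using hne)
    rw [← hij, edge_mem_cell (hbs v hv)] at h1
    simp at h1
  have huex : ∀ v ∈ P.extremePoints ℝ, ∀ A : ι, v ∈ A.1 →
      ∃ t, ∃ i, t = bs v i ∧ A.1 = cell P v (bs v) {i} := by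
    intro v hv A hvA
    obtain ⟨i, hi⟩ := hfacet v hv A hvA
    exact ⟨_, i, rfl, hi⟩
  choose! u hu using huex
  have hcell_mem : ∀ v ∈ P.extremePoints ℝ, ∀ i x, x ∈ cell P v (bs v) {i} ↔
      x ∈ P ∧ (bs v).repr (x - v) i = 0 := by
    intro v hv i x
    simp [cell]
  let D : SimpleData n ι :=
    { P := P
      V := hVfin.toFinset
      J := fun v => Finset.univ.filter fun A => v ∈ A.1
      α := α
      b := c
      u := u
      convex := hconvex
      compact := hcompact
      nonneg := fun x hx A => (hα A x hx).1
      extreme := fun v hv => hVfin.mem_toFinset.1 hv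
      mem_J := by
        intro v hv A
        rw [hVfin.mem_toFinset] at hv
        rw [(hα A v hv.1).2]
        simp
      card_J := by
        intro v hv
        rw [hVfin.mem_toFinset] at hv
        choose e he using hfacet' v hv
        have : (Finset.univ.filter fun A : ι => v ∈ A.1) = Finset.univ.image e := by
          ext A
          simp only [Finset.mem_filter, Finset.mem_univ, true_and, Finset.mem_image]
          constructor
          · intro hA
            obtain ⟨i, hi⟩ := hfacet v hv A hA
            exact ⟨i, Subtype.ext ((he i).trans hi.symm)⟩
          · rintro ⟨i, rfl⟩
            rw [he]
            exact mem_cell_self hv.1 _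
        rw [this, Finset.card_image_of_injective, Finset.card_univ, Fintype.card_fin]
        intro i j hij
        apply hcellinj v hv
        rw [← he, ← he, hij]
      u_pos := by
        intro v hv A hA
        rw [hVfin.mem_toFinset] at hv
        have hvA : v ∈ A.1 := (Finset.mem_filter.1 hA).2
        obtain ⟨i, hi, hAi⟩ := hu v hv A hvA
        have h1 := hα A _ (hbs v hv i)
        have h2 := (hα A v hv.1).2.2 hvA
        have h3 : α A (v + bs v i) + c A ≠ 0 := by
          rw [Ne, h1.2, hAi, edge_mem_cell (hbs v hv)]
          simp
        have h4 := lt_of_le_of_ne h1.1 h3.symm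
        rw [map_add] at h4
        rw [hi]
        linarith
      u_zero := by
        intro v hv A hA B hB hBA
        rw [hVfin.mem_toFinset] at hv
        have hvA : v ∈ A.1 := (Finset.mem_filter.1 hA).2
        have hvB : v ∈ B.1 := (Finset.mem_filter.1 hB).2
        obtain ⟨i, hi, hAi⟩ := hu v hv A hvA
        obtain ⟨j, -, hBj⟩ := hu v hv B hvB
        have hij : i ≠ j := by
          rintro rfl
          exact hBA (Subtype.ext (hBj.trans hAi.symm))
        have h1 : α B (v + bs v i) + c B = 0 := by
          rw [(hα B _ (hbs v hv i)).2, hBj, edge_mem_cell (hbs v hv)]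
          simpa using hij
        have h2 := (hα B v hv.1).2.2 hvB
        rw [map_add] at h1
        rw [hi]
        linarith
      edge := by
        intro v hv A hA
        rw [hVfin.mem_toFinset] at hv
        obtain ⟨i, hi, -⟩ := hu v hv A (Finset.mem_filter.1 hA).2
        rw [hi]
        exact hbs v hv i
      exists_max := by
        intro v hv K hK ξ
        rw [hVfin.mem_toFinset] at hv
        set F : Set (Fin n → ℝ) := P ∩ ⋂ A ∈ K, A.1 with hF
        have hFcomp : IsCompact F :=
          hcompact.inter_right (isClosed_biInter fun A _ => (hfext A.1 A.2.1).2.isClosed)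
        have hvF : v ∈ F := ⟨hv.1, Set.mem_iInter₂.2 fun A hA => (Finset.mem_filter.1 (hK hA)).2⟩
        have hFext : IsExtreme ℝ P F := by
          refine ⟨Set.inter_subset_left, fun x hx y hy z hz hxyz => ⟨hx, ?_⟩⟩
          refine Set.mem_iInter₂.2 fun A hA => ?_
          exact (hfext A.1 A.2.1).1.left_mem_of_mem_openSegment hx hy
            (Set.mem_iInter₂.1 hz.2 A hA) hxyz
        obtain ⟨z, hz, hzmax⟩ := hFcomp.exists_isMaxOn ⟨v, hvF⟩
          (ξ.continuous_of_finiteDimensional).continuousOn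
        obtain ⟨w, hw⟩ := (isCompact_argmax hFcomp ξ).extremePoints_nonempty
          ⟨z, hz, fun p hp => hzmax hp⟩
        have hwV : w ∈ P.extremePoints ℝ :=
          (hFext.trans (isExtreme_argmax F ξ)).extremePoints_subset_extremePoints hw
        refine ⟨w, hVfin.mem_toFinset.2 hwV, fun A hA => ?_, fun x hx hxK => ?_⟩
        · exact Finset.mem_filter.2 ⟨Finset.mem_univ _, Set.mem_iInter₂.1 hw.1.1.2 A hA⟩
        · exact hw.1.2 x ⟨hx, Set.mem_iInter₂.2 fun A hA => (hα A x hx).2.1 (hxK A hA)⟩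
      V_int := by
        intro v hv
        rw [hVfin.mem_toFinset] at hv
        obtain ⟨m, -, rfl⟩ := hextS hv
        exact ⟨m, rfl⟩
      u_int := by
        intro v hv A hA
        rw [hVfin.mem_toFinset] at hv
        obtain ⟨i, hi, -⟩ := hu v hv A (Finset.mem_filter.1 hA).2
        obtain ⟨m, hm⟩ := hbint v hv i
        exact ⟨m, hi.trans hm⟩ }
  have hmemV : ∀ v, v ∈ D.V ↔ v ∈ P.extremePoints ℝ := fun v => hVfin.mem_toFinset
  have hmemJ : ∀ v (A : ι), A ∈ D.J v ↔ v ∈ A.1 := fun v A => by simp [D]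
  have hmemface : ∀ K x, x ∈ D.face K ↔ x ∈ P ∧ ∀ A ∈ K, x ∈ A.1 := by
    intro K x
    constructor
    · rintro ⟨hx, h⟩
      exact ⟨hx, fun A hA => (hα A x hx).2.1 (h A hA)⟩
    · rintro ⟨hx, h⟩
      exact ⟨hx, fun A hA => (hα A x hx).2.2 (h A hA)⟩
  -- a facet set at `v` corresponds to a set of coordinates at `v`
  have hkey : ∀ v ∈ P.extremePoints ℝ, ∀ K ⊆ D.J v, ∃ I : Finset (Fin n),
      I.card = K.card ∧ D.face K = cell P v (bs v) I ∧
        ∀ A : ι, ∀ i ∈ I, A.1 = cell P v (bs v) {i} → A ∈ K := by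
    intro v hv K hK
    choose e he using hfacet' v hv
    have heinj : Function.Injective e := by
      intro i j hij
      apply hcellinj v hv
      rw [← he, ← he, hij]
    have hKe : K = (Finset.univ.filter fun i => e i ∈ K).image e := by
      ext A
      simp only [Finset.mem_image, Finset.mem_filter, Finset.mem_univ, true_and]
      constructor
      · intro hA
        obtain ⟨i, hi⟩ := hfacet v hv A ((hmemJ v A).1 (hK hA))
        have : e i = A := Subtype.ext ((he i).trans hi.symm)
        exact ⟨i, this ▸ hA, this⟩
      · rintro ⟨i, hi, rfl⟩
        exact hi
    refine ⟨Finset.univ.filter fun i => e i ∈ K, ?_, ?_, ?_⟩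
    · conv_rhs => rw [hKe]
      rw [Finset.card_image_of_injective _ heinj]
    · ext x
      rw [hmemface]
      refine and_congr_right fun hx => ?_
      conv_lhs => rw [hKe]
      simp only [Finset.mem_image, forall_exists_index, and_imp, forall_apply_eq_imp_iff₂]
      refine forall₂_congr fun i _ => ?_
      rw [he, hcell_mem v hv]
      simp [hx]
    · intro A i hi hA
      have : e i = A := Subtype.ext ((he i).trans hA.symm)
      exact this ▸ (Finset.mem_filter.1 hi).2
  refine ⟨ι, D, ?_, ?_, ?_⟩
  · intro K hK
    obtain ⟨v, hv, hKv⟩ := D.mem_faceSets.1 hK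
    rw [hmemV] at hv
    obtain ⟨I, hcard, hface, -⟩ := hkey v hv K hKv
    rw [hface, ← hcard]
    exact ⟨cell_isFaceOf hv.1 (hpos v hv) I, by simpa using I.card_le_univ,
      faceDim_cell hv.1 (hbs v hv) I⟩
  · have hrec : ∀ K ∈ D.faceSets, ∀ A : ι, A ∈ K ↔ D.face K ⊆ A.1 := by
      intro K hK A
      refine ⟨fun hA x hx => ((hmemface K x).1 hx).2 A hA, fun hA => ?_⟩
      obtain ⟨v, hv, hKv⟩ := D.mem_faceSets.1 hK
      rw [hmemV] at hv
      obtain ⟨I, -, hface, hI⟩ := hkey v hv K hKv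
      rw [hface] at hA
      obtain ⟨i, hi⟩ := hfacet v hv A (hA (mem_cell_self hv.1 I))
      refine hI A i ?_ hi
      by_contra hiI
      have := hA ((edge_mem_cell (hbs v hv)).2 hiI)
      rw [hi, edge_mem_cell (hbs v hv)] at this
      simp at this
    intro K hK K' hK' hKK'
    ext A
    rw [hrec K hK, hrec K' hK', hKK']
  · intro F hF
    obtain ⟨v, hv⟩ := (hfext F hF).2.extremePoints_nonempty (hfne F hF)
    have hvV : v ∈ P.extremePoints ℝ := (hfext F hF).1.extremePoints_subset_extremePoints hv
    obtain ⟨I, rfl⟩ := hF.eq_cell hvV.1 (hbs v hvV) (hpos v hvV) hv.1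
    choose e he using hfacet' v hvV
    refine ⟨I.image e, D.mem_faceSets.2 ⟨v, (hmemV v).2 hvV, ?_⟩, ?_⟩
    · intro A hA
      obtain ⟨i, -, rfl⟩ := Finset.mem_image.1 hA
      rw [hmemJ, he]
      exact mem_cell_self hvV.1 _
    · ext x
      rw [hmemface]
      refine and_congr_right fun hx => ?_
      simp only [Finset.mem_image, forall_exists_index, and_imp, forall_apply_eq_imp_iff₂]
      refine forall₂_congr fun i _ => ?_
      rw [he, hcell_mem v hvV]
      simp [hx]

/-- For a full-dimensional simple lattice polytope `P ⊂ ℝ^n` and a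
homogeneous polynomial `φ` of degree `d`, the generating function
`G_φ(q,y) = (y+1)^d ∑_F (y+1)^{dim F} (-y)^{codim F} D_{φ,F}(q)` satisfies
`G_φ(q,y) = (-y)^{n+d} G_φ(-q, 1/y)`. -/
theorem stmt0 (n d : ℕ) (P : Set (Fin n → ℝ))
    (S : Finset (Fin n → ℤ)) (hP : P = convexHull ℝ (intVec '' (S : Set (Fin n → ℤ))))
    (hfull : affineSpan ℝ P = ⊤) (hsimple : IsSimple P)
    (φ : (Fin n → ℝ) → ℂ) (p : MvPolynomial (Fin n) ℂ) (hp : p.IsHomogeneous d)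
    (hφ : ∀ x, φ x = MvPolynomial.eval (fun i => (x i : ℂ)) p)
    (hfin : {F : Set (Fin n → ℝ) | IsFaceOf P F}.Finite)
    (D : Set (Fin n → ℝ) → Polynomial ℂ)
    (hD : ∀ F, IsFaceOf P F → ∀ q : ℕ, 0 < q →
      (D F).eval (q : ℂ) = ∑ᶠ m ∈ {m : Fin n → ℤ | intVec m ∈ (q : ℝ) • F}, φ (intVec m))
    (G : ℝ → ℝ → ℂ)
    (hG : ∀ q y : ℝ, G q y = ((y : ℂ) + 1) ^ d *
      ∑ F ∈ hfin.toFinset,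
        ((y : ℂ) + 1) ^ faceDim F * (-(y : ℂ)) ^ (n - faceDim F) * (D F).eval (q : ℂ)) :
    ∀ q y : ℝ, y ≠ 0 → G q y = (-(y : ℂ)) ^ (n + d) * G (-q) (1 / y) := by
  obtain ⟨ι, E, hE, hinj, hsurj⟩ := exists_simpleData hP hfull hsimple hfin
  obtain ⟨R, hR⟩ := E.reciprocity hp
  -- the two expressions for the weighted sum are polynomials agreeing at all positive integers
  have hpoly : ∀ y : ℂ, y ≠ 0 → ∀ z : ℂ, ∑ F ∈ hfin.toFinset,
      (y + 1) ^ faceDim F * (-y) ^ (n - faceDim F) * (D F).eval z = (R y).eval z := by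
    intro y hy z
    set T : Polynomial ℂ := ∑ F ∈ hfin.toFinset,
      Polynomial.C ((y + 1) ^ faceDim F * (-y) ^ (n - faceDim F)) * D F with hT
    have hTeval : ∀ z, T.eval z = ∑ F ∈ hfin.toFinset,
        (y + 1) ^ faceDim F * (-y) ^ (n - faceDim F) * (D F).eval z := by
      intro z
      simp only [hT, Polynomial.eval_finsetSum, Polynomial.eval_mul, Polynomial.eval_C]
    have hTR : T = R y := by
      apply Polynomial.eq_of_infinite_eval_eq
      have hinf : (Set.range fun k : ℕ => ((k + 1 : ℕ) : ℂ)).Infinite :=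
        Set.infinite_range_of_injective fun a b h => by
          have := Nat.cast_injective (R := ℂ) h
          omega
      refine hinf.mono ?_
      rintro _ ⟨k, rfl⟩
      change T.eval _ = (R y).eval _
      rw [hTeval, (hR y hy).1 (k + 1) k.succ_pos]
      symm
      refine Finset.sum_bij (fun K _ => E.face K) ?_ ?_ ?_ ?_
      · intro K hK
        exact hfin.mem_toFinset.2 (hE K hK).1
      · intro K hK K' hK' h
        exact hinj hK hK' h
      · intro F hF
        obtain ⟨K, hK, hKF⟩ := hsurj F (hfin.mem_toFinset.1 hF)
        exact ⟨K, hK, hKF⟩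
      · intro K hK
        obtain ⟨hface, hcard, hdim⟩ := hE K hK
        rw [hD _ hface (k + 1) k.succ_pos, finsum_mem_eq_finite_toFinset_sum _
          (E.pts_finite (k + 1) K), hdim, faceWeight, Nat.sub_sub_self hcard, add_comm y 1]
        simp only [hφ]
        rfl
    rw [← hTR, hTeval]
  intro q y hy
  have hyc : (y : ℂ) ≠ 0 := by exact_mod_cast hy
  have hinv : ((1 / y : ℝ) : ℂ) = (y : ℂ)⁻¹ := by push_cast; rw [one_div]
  rw [hG, hG, hinv, hpoly y hyc, hpoly _ (inv_ne_zero hyc), (hR y hyc).2]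
  have hfac : ((y : ℂ) + 1) ^ d = (y : ℂ) ^ d * ((y : ℂ)⁻¹ + 1) ^ d := by
    rw [← mul_pow, mul_add, mul_inv_cancel₀ hyc, mul_one, add_comm]
  have hneg : (-(y : ℂ)) ^ (n + d) = (-(y : ℂ)) ^ n * ((-1) ^ d * (y : ℂ) ^ d) := by
    rw [pow_add, ← mul_pow, neg_one_mul]
  rw [hfac, hneg, Complex.ofReal_neg]
  ring
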